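/- Let k, m, n be positive integers with k+m ≤ n. For all w, w′ ∈ Sₙ, the structure constant c^{w′}_{w, r[k,m]} equals the number of paths of length m in the k-Bruhat order from w to w′ whose labels are strictly increasing: w⁽¹⁾(a₁) < w⁽²⁾(a₂) < ⋯ < w⁽ᵐ⁾(a_m). -/

import Mathlib

open Equiv MvPolynomial

attribute [local instance] Classical.propDecidable

namespace SchubertPieri

/-- Position `j ∈ {1,…,N}` (1-indexed) as an element of `Fin N` (0-indexed). -/
def pos (N : ℕ) [NeZero N] (j : ℕ) : Fin N :=
  ⟨(j - 1) % N, Nat.mod_lt _ (Nat.pos_of_ne_zero (NeZero.ne N))⟩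

/-- The transposition `t_{a,b}` interchanging positions `a` and `b` (1-indexed). -/
def t (N : ℕ) [NeZero N] (a b : ℕ) : Equiv.Perm (Fin N) :=
  Equiv.swap (pos N a) (pos N b)

/-- The value `w(j)` for `j ∈ {1,…,N}` (1-indexed). -/
def val {N : ℕ} [NeZero N] (w : Equiv.Perm (Fin N)) (j : ℕ) : ℕ :=
  (w (pos N j) : ℕ) + 1

/-- The length of `w`: its number of inversions. -/
def len {N : ℕ} (w : Equiv.Perm (Fin N)) : ℕ :=
  (Finset.univ.filter fun p : Fin N × Fin N => p.1 < p.2 ∧ w p.2 < w p.1).card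

/-- The longest permutation `w₀ : j ↦ N+1-j`. -/
def w0 (N : ℕ) : Equiv.Perm (Fin N) :=
  ⟨Fin.rev, Fin.rev, Fin.rev_rev, Fin.rev_rev⟩

/-- The product `t_{a 0, b 0} ⋯ t_{a (i-1), b (i-1)}`. -/
def tProd (N : ℕ) [NeZero N] (a b : ℕ → ℕ) (i : ℕ) : Equiv.Perm (Fin N) :=
  ((List.range i).map fun j => t N (a j) (b j)).prod

/-- `r[k,m] = t_{k,k+1} t_{k,k+2} ⋯ t_{k,k+m}`, the (m+1)-cycle with
`r[k,m](k) = k+m` and `r[k,m](j) = j-1` for `k+1 ≤ j ≤ k+m`. -/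
def rPerm (N k m : ℕ) [NeZero N] : Equiv.Perm (Fin N) :=
  ((List.range m).map fun i => t N k (k + 1 + i)).prod

/-- `c[k,m] = t_{k,k+1} t_{k-1,k+1} ⋯ t_{k-m+1,k+1}`, the (m+1)-cycle with
`c[k,m](j) = j+1` for `k-m+1 ≤ j ≤ k` and `c[k,m](k+1) = k-m+1`. -/
def cPerm (N k m : ℕ) [NeZero N] : Equiv.Perm (Fin N) :=
  ((List.range m).map fun i => t N (k - i) (k + 1)).prod

/-- The conditions that `aᵢ ≤ k < bᵢ` (with all indices in `{1,…,N}`) and that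
`ℓ(w t_{a₁ b₁} ⋯ t_{aᵢ bᵢ}) = ℓ(w) + i` for `1 ≤ i ≤ m`. -/
def StepOK (N k m : ℕ) [NeZero N] (w : Equiv.Perm (Fin N)) (a b : ℕ → ℕ) : Prop :=
  (∀ i, i < m → 1 ≤ a i ∧ a i ≤ k ∧ k < b i ∧ b i ≤ N) ∧
  (∀ i, i ≤ m → len (w * tProd N a b i) = len w + i)

/-- `w →_{r[k,m]} w'`. -/
def RelR (N k m : ℕ) [NeZero N] (w w' : Equiv.Perm (Fin N)) : Prop :=
  ∃ a b : ℕ → ℕ, StepOK N k m w a b ∧ w' = w * tProd N a b m ∧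
    (∀ i j, i < m → j < m → i ≠ j → b i ≠ b j)

/-- `w →_{c[k,m]} w'`. -/
def RelC (N k m : ℕ) [NeZero N] (w w' : Equiv.Perm (Fin N)) : Prop :=
  ∃ a b : ℕ → ℕ, StepOK N k m w a b ∧ w' = w * tProd N a b m ∧
    (∀ i j, i < m → j < m → i ≠ j → a i ≠ a j)

/-- The divided difference operator `∂ᵢ f = (f - sᵢ·f)/(xᵢ - xᵢ₊₁)` (1-indexed `i`);
the quotient is exact, and is recovered here as the (unique) witness of divisibility. -/
noncomputable def divDiff {N : ℕ} [NeZero N] (i : ℕ) (f : MvPolynomial (Fin N) ℤ) :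
    MvPolynomial (Fin N) ℤ :=
  if h : (X (pos N i) - X (pos N (i + 1))) ∣ (f - rename (⇑(t N i (i + 1))) f) then
    h.choose
  else 0

/-- `∂_{a₁} ∘ ⋯ ∘ ∂_{a_p}` applied to `f`, for a word `l = [a₁,…,a_p]`. -/
noncomputable def divDiffWord {N : ℕ} [NeZero N] (l : List ℕ) (f : MvPolynomial (Fin N) ℤ) :
    MvPolynomial (Fin N) ℤ :=
  l.foldr divDiff f

/-- Auxiliary: produce a reduced word for `w` by repeatedly removing a descent. -/
def redWordAux (N : ℕ) [NeZero N] : ℕ → Equiv.Perm (Fin N) → List ℕ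
  | 0, _ => []
  | fuel + 1, w =>
    match ((List.range (N - 1)).map (· + 1)).find? (fun i => decide (val w (i + 1) < val w i)) with
    | none => []
    | some i => redWordAux N fuel (w * t N i (i + 1)) ++ [i]

/-- A canonical reduced word `(a₁,…,a_p)` for `w`, i.e. `w = s_{a₁} ⋯ s_{a_p}` with `p = ℓ(w)`. -/
def redWord (N : ℕ) [NeZero N] (w : Equiv.Perm (Fin N)) : List ℕ :=
  redWordAux N (N * N) w

/-- The staircase monomial `x₁^{N-1} x₂^{N-2} ⋯ x_{N-1}`. -/
noncomputable def staircase (N : ℕ) : MvPolynomial (Fin N) ℤ :=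
  ∏ i : Fin N, X i ^ (N - 1 - (i : ℕ))

/-- The Schubert polynomial `𝔖_w = ∂_{w⁻¹w₀}(x₁^{N-1} ⋯ x_{N-1})`. -/
noncomputable def schubertPoly (N : ℕ) [NeZero N] (w : Equiv.Perm (Fin N)) :
    MvPolynomial (Fin N) ℤ :=
  divDiffWord (redWord N (w⁻¹ * w0 N)) (staircase N)

/-- The ideal of `Rₙ` generated by the symmetric polynomials with zero constant term. -/
noncomputable def symIdeal (N : ℕ) : Ideal (MvPolynomial (Fin N) ℤ) :=
  Ideal.span {f : MvPolynomial (Fin N) ℤ | f.IsSymmetric ∧ constantCoeff f = 0}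

/-- The ring `Hₙ = Rₙ/𝒮`. -/
abbrev HRing (N : ℕ) := MvPolynomial (Fin N) ℤ ⧸ symIdeal N

/-- The class of the Schubert polynomial `𝔖_w` in `Hₙ`. -/
noncomputable def SS (N : ℕ) [NeZero N] (w : Equiv.Perm (Fin N)) : HRing N :=
  Ideal.Quotient.mk (symIdeal N) (schubertPoly N w)

/-- The complete homogeneous symmetric polynomial of degree `m` in `x₁,…,x_k`. -/
noncomputable def hPoly (N k m : ℕ) : MvPolynomial (Fin N) ℤ :=
  ∑ s ∈ (Finset.univ.filter fun i : Fin N => (i : ℕ) < k).sym m,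
    (Multiset.map X (s : Multiset (Fin N))).prod

/-- The elementary symmetric polynomial of degree `m` in `x₁,…,x_k`. -/
noncomputable def ePoly (N k m : ℕ) : MvPolynomial (Fin N) ℤ :=
  ∑ s ∈ (Finset.univ.filter fun i : Fin N => (i : ℕ) < k).powersetCard m, ∏ i ∈ s, X i

/-- Covering relation of the `k`-Bruhat order. -/
def kCover (N k : ℕ) [NeZero N] (w w' : Equiv.Perm (Fin N)) : Prop :=
  ∃ a b : ℕ, 1 ≤ a ∧ a ≤ k ∧ k < b ∧ b ≤ N ∧ w' = w * t N a b ∧ len w' = len w + 1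

/-- The (strict) `k`-Bruhat order `<ₖ`. -/
def kBruhat (N k : ℕ) [NeZero N] : Equiv.Perm (Fin N) → Equiv.Perm (Fin N) → Prop :=
  Relation.TransGen (kCover N k)

/-- The label `w⁽ⁱ⁺¹⁾(a_{i+1})` (0-indexed `i`) of the `(i+1)`-st step of a path. -/
def label {N : ℕ} [NeZero N] (w : Equiv.Perm (Fin N)) (a b : ℕ → ℕ) (i : ℕ) : ℕ :=
  val (w * tProd N a b (i + 1)) (a i)

/-- `(a,b)` encodes a path of length `m` in the `k`-Bruhat order from `w` to `w'`
(normalized so that `a i = b i = 0` for `i ≥ m`, making the encoding unique). -/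
def PathWit (N k m : ℕ) [NeZero N] (w w' : Equiv.Perm (Fin N))
    (ab : (ℕ → ℕ) × (ℕ → ℕ)) : Prop :=
  StepOK N k m w ab.1 ab.2 ∧ w' = w * tProd N ab.1 ab.2 m ∧
    ∀ i, m ≤ i → ab.1 i = 0 ∧ ab.2 i = 0

/-- Paths of length `m` in the `k`-Bruhat order from `w` to `w'` with strictly
increasing labels. -/
def IncPaths (N k m : ℕ) [NeZero N] (w w' : Equiv.Perm (Fin N)) :
    Set ((ℕ → ℕ) × (ℕ → ℕ)) :=
  {ab | PathWit N k m w w' ab ∧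
    ∀ i j, i < j → j < m → label w ab.1 ab.2 i < label w ab.1 ab.2 j}

/-- Paths of length `m` in the `k`-Bruhat order from `w` to `w'` with strictly
decreasing labels. -/
def DecPaths (N k m : ℕ) [NeZero N] (w w' : Equiv.Perm (Fin N)) :
    Set ((ℕ → ℕ) × (ℕ → ℕ)) :=
  {ab | PathWit N k m w w' ab ∧
    ∀ i j, i < j → j < m → label w ab.1 ab.2 j < label w ab.1 ab.2 i}


/-- The cycle `(x₁ x₂ … x_r)` (sending `x₁ ↦ x₂ ↦ ⋯ ↦ x_r ↦ x₁`), as a product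
of transpositions. -/
def cycleList (N : ℕ) [NeZero N] (l : List ℕ) : Equiv.Perm (Fin N) :=
  ((l.zip l.tail).map fun p => t N p.1 p.2).prod

/-- The Grassmannian permutation `h[k;p,q]` of descent `k` and hook shape `(p,1^{q-1})`:
the `(p+q)`-cycle `(k-q+1  k-q+2 … k  k+p  k+p-1 … k+1)`. -/
def hookPerm (N k p q : ℕ) [NeZero N] : Equiv.Perm (Fin N) :=
  cycleList N (((List.range q).map fun i => k - q + 1 + i) ++
    ((List.range p).reverse.map fun i => k + 1 + i))

/-- `w|ₚ ∈ S_{N-1}`: delete row `p` and column `w(p)` from the permutation matrix of `w`. -/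
def drop {N : ℕ} (w : Equiv.Perm (Fin (N + 1))) (p : Fin (N + 1)) : Equiv.Perm (Fin N) :=
  Equiv.removeNone (((finSuccEquiv' p).symm.trans (w : Fin (N + 1) ≃ Fin (N + 1))).trans
    (finSuccEquiv' (w p)))

/-- `lam` is a partition with at most `k` parts (1-indexed parts `lam 1 ≥ lam 2 ≥ ⋯`,
normalized by `lam 0 = 0`). -/
def IsPartFun (k : ℕ) (lam : ℕ → ℕ) : Prop :=
  lam 0 = 0 ∧ (∀ j, 1 ≤ j → lam (j + 1) ≤ lam j) ∧ ∀ j, k < j → lam j = 0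

/-- `h_d(x₁,…,x_k)` for an integer `d`, with `h_d = 0` for `d < 0`. -/
noncomputable def hPolyZ (N k : ℕ) (d : ℤ) : MvPolynomial (Fin N) ℤ :=
  if 0 ≤ d then hPoly N k d.toNat else 0

/-- The Schur polynomial `s_λ(x₁,…,x_k)`, via the Jacobi–Trudi determinant
`det(h_{λᵢ+j-i})_{1 ≤ i,j ≤ k}`. -/
noncomputable def schurPoly (N k : ℕ) (lam : ℕ → ℕ) : MvPolynomial (Fin N) ℤ :=
  (Matrix.of fun i j : Fin k =>
    hPolyZ N k ((lam ((i : ℕ) + 1) : ℤ) + (j : ℕ) - (i : ℕ))).det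

/-- `r_j = #{i : aᵢ = j}` (with `i` ranging over `0,…,m-1`, 0-indexed). -/
def rJ (a : ℕ → ℕ) (m j : ℕ) : ℕ := ((Finset.range m).filter fun i => a i = j).card

/-- `μ_j = r_{j+1} + ⋯ + r_k`. -/
def muJ (a : ℕ → ℕ) (m k j : ℕ) : ℕ :=
  if j = 0 then 0 else ∑ j' ∈ Finset.Icc (j + 1) k, rJ a m j'

/-- `λ_j = μ_j + r_j`. -/
def lamJ (a : ℕ → ℕ) (m k j : ℕ) : ℕ :=
  if j = 0 then 0 else muJ a m k j + rJ a m j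

/-- `d_j = #{i : bᵢ = N+1-j}` (with `i` ranging over `0,…,m-1`, 0-indexed). -/
def dJ (b : ℕ → ℕ) (m N j : ℕ) : ℕ :=
  ((Finset.range m).filter fun i => b i = N + 1 - j).card

/-- `μ′_j = d_{j+1} + ⋯ + d_{N-k}`. -/
def muJ' (b : ℕ → ℕ) (m N k j : ℕ) : ℕ :=
  if j = 0 then 0 else ∑ j' ∈ Finset.Icc (j + 1) (N - k), dJ b m N j'

/-- `λ′_j = μ′_j + d_j`. -/
def lamJ' (b : ℕ → ℕ) (m N k j : ℕ) : ℕ :=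
  if j = 0 then 0 else muJ' b m N k j + dJ b m N j

/-- The conjugate (transpose) partition: `νᵗ_j = #{i : νᵢ ≥ j}`, for `ν` with at
most `k` parts. -/
def conjPart (k : ℕ) (nu : ℕ → ℕ) (j : ℕ) : ℕ :=
  if j = 0 then 0 else ((Finset.Icc 1 k).filter fun i => j ≤ nu i).card

/-- `wv` is the Grassmannian permutation of descent `k` and shape `nu`:
`wv(j) = j + ν_{k+1-j}` for `1 ≤ j ≤ k`, and `wv` is increasing on `{k+1,…,N}`. -/
def IsGrassOf (N k : ℕ) [NeZero N] (nu : ℕ → ℕ) (wv : Equiv.Perm (Fin N)) : Prop :=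
  (∀ j, 1 ≤ j → j ≤ k → val wv j = j + nu (k + 1 - j)) ∧
  (∀ j, k < j → j < N → val wv j < val wv (j + 1))

/-- Paths of length `m` in the `k`-Bruhat order from `w` to `w'` whose labels
increase strictly for the first `p` steps and decrease strictly thereafter
(positions `p, p+1, …, m` being decreasing, 1-indexed). -/
def IncDecPaths (N k m p : ℕ) [NeZero N] (w w' : Equiv.Perm (Fin N)) :
    Set ((ℕ → ℕ) × (ℕ → ℕ)) :=
  {ab | PathWit N k m w w' ab ∧
    (∀ i j, i < j → j < p → label w ab.1 ab.2 i < label w ab.1 ab.2 j) ∧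
    (∀ i j, p - 1 ≤ i → i < j → j < m → label w ab.1 ab.2 j < label w ab.1 ab.2 i)}

/-- Paths of length `m` in the `k`-Bruhat order from `w` to `w'` whose labels
decrease strictly for the first `q` steps and increase strictly thereafter. -/
def DecIncPaths (N k m q : ℕ) [NeZero N] (w w' : Equiv.Perm (Fin N)) :
    Set ((ℕ → ℕ) × (ℕ → ℕ)) :=
  {ab | PathWit N k m w w' ab ∧
    (∀ i j, i < j → j < q → label w ab.1 ab.2 j < label w ab.1 ab.2 i) ∧
    (∀ i j, q - 1 ≤ i → i < j → j < m → label w ab.1 ab.2 i < label w ab.1 ab.2 j)}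

/-! The functionals `f ↦` (constant term of `∂_u f`) vanish on the ideal of symmetric polynomials
without constant term and are dual to the Schubert polynomials, so they read off coefficients in the
Schubert basis. In these coefficients, multiplication by `x_p` is the signed sum of the operators of
the covers `u t_{p,q} < u` (Monk's rule).

Let `A_V` be the sum of the operators of the covers of the `k`-Bruhat order with label `V`, and
`A'_V` the same sum for `k + 1`. Then `(A'_V - A_V) A_v = A'_v (A'_V - A_V)` for `v < V`,
`A'_V (A'_V - A_V) = 0`, and `∑ (A'_V - A_V)` is multiplication by `x_{k+1}`. Hence the sums of
products of `m` operators `A_V` with decreasing labels satisfy the recursion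
`h_m(x₁,…,x_{k+1}) = h_m(x₁,…,x_k) + x_{k+1} h_{m-1}(x₁,…,x_{k+1})`: multiplication by
`h_m(x₁,…,x_k)` counts the increasing paths of length `m`. The only such path starting at the
identity ends at `r[k,m]`, so that `h_m(x₁,…,x_k)` represents `𝔖_{r[k,m]}`. -/

section Length

variable {N : ℕ}

theorem swap_lt_swap_of_covBy {α : Type*} [DecidableEq α] [LinearOrder α] {p q x y : α}
    (hpq : p ⋖ q) (hxy : x < y) (hne : ¬(x = p ∧ y = q)) : swap p q x < swap p q y := by
  have below : ∀ z, z < q → z ≤ p := fun z => hpq.le_of_lt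
  have above : ∀ z, p < z → q ≤ z := fun z => hpq.ge_of_gt
  have := hpq.lt
  simp only [swap_apply_def]
  grind

/-- The Lehmer code of `u`, counting the inversions of `u` by their first position. -/
def lehmerCode (u : Perm (Fin N)) (i : Fin N) : ℕ :=
  (Finset.univ.filter fun j => i < j ∧ u j < u i).card

theorem sum_lehmerCode (u : Perm (Fin N)) : ∑ i, lehmerCode u i = len u := by
  simp only [lehmerCode, len, Finset.card_filter, Fintype.sum_prod_type]

theorem lehmerCode_eq_of_descent (u : Perm (Fin N)) {p q : Fin N} (hpq : p ⋖ q) (h : u q < u p)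
    (i : Fin N) :
    lehmerCode u i = lehmerCode (u * swap p q) (swap p q i) + if i = p then 1 else 0 := by
  have reindex : lehmerCode (u * swap p q) (swap p q i) =
      (Finset.univ.filter fun j => swap p q i < swap p q j ∧ u j < u i).card := by
    simp only [lehmerCode, Finset.card_filter]
    rw [← Equiv.sum_comp (swap p q)]
    simp only [Perm.mul_apply, swap_apply_self]
  have order_iff (j : Fin N) (hj : ¬(i = p ∧ j = q)) (hij : u j < u i) :
      swap p q i < swap p q j ↔ i < j := by
    refine ⟨fun hlt => ?_, fun hlt => swap_lt_swap_of_covBy hpq hlt hj⟩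
    simpa using swap_lt_swap_of_covBy hpq hlt (by grind [swap_apply_eq_iff])
  rw [reindex, lehmerCode]
  split_ifs with hi
  · rw [← Finset.card_insert_of_notMem (a := q) (by simp [hi, hpq.lt.le])]
    congr! 1
    ext j
    have := hpq.lt
    by_cases hj : j = q <;> grind
  · rw [add_zero]
    congr! 1
    grind

theorem len_mul_swap_of_descent (u : Perm (Fin N)) {p q : Fin N} (hpq : p ⋖ q) (h : u q < u p) :
    len (u * swap p q) + 1 = len u := by
  simp only [← sum_lehmerCode, lehmerCode_eq_of_descent u hpq h, Finset.sum_add_distrib,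
    Finset.sum_ite_eq', Finset.mem_univ, if_true, Equiv.sum_comp (swap p q)]

theorem len_mul_swap_of_ascent (u : Perm (Fin N)) {p q : Fin N} (hpq : p ⋖ q) (h : u p < u q) :
    len (u * swap p q) = len u + 1 := by
  simpa [mul_assoc] using (len_mul_swap_of_descent (u * swap p q) hpq (by simpa using h)).symm

theorem ascent_or_descent (u : Perm (Fin N)) {p q : Fin N} (hpq : p < q) : u p < u q ∨ u q < u p :=
  (u.injective.ne hpq.ne).lt_or_gt

theorem len_mul_swap_le_of_covBy (u : Perm (Fin N)) {p q : Fin N} (hpq : p ⋖ q) :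
    len (u * swap p q) ≤ len u + 1 := by
  rcases ascent_or_descent u hpq.lt with h | h
  · exact (len_mul_swap_of_ascent u hpq h).le
  · have := len_mul_swap_of_descent u hpq h
    omega

/- Conjugating by the adjacent transposition `swap r q` moves `q` one step closer to `p`; of the
two lengths gained or lost at the ends of the conjugation, at least one is a loss. -/
theorem len_mul_swap_lt (u : Perm (Fin N)) {p q : Fin N} (hpq : p < q) (h : u q < u p) :
    len (u * swap p q) < len u := by
  induction q using WellFoundedLT.induction generalizing u with
  | _ q ih =>
    obtain ⟨r, hpr, hrq⟩ := exists_le_covBy_of_lt hpq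
    obtain rfl | hpr := hpr.eq_or_lt
    · have := len_mul_swap_of_descent u hrq h
      omega
    have conj : u * swap p q = u * swap r q * swap p r * swap r q := by
      rw [mul_assoc, mul_assoc, ← mul_assoc (swap r q), swap_mul_swap_mul_swap hpr.ne hpq.ne,
        swap_comm]
    have hp : swap r q p = p := swap_apply_of_ne_of_ne hpr.ne hpq.ne
    have hq : swap p r q = q := swap_apply_of_ne_of_ne hpq.ne' hrq.lt.ne'
    have middle := ih r hrq.lt (u * swap r q) hpr (by simpa [hp] using h)
    rw [conj]
    rcases ascent_or_descent u hrq.lt with hrq' | hrq'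
    · have first := len_mul_swap_of_ascent u hrq hrq'
      have last := len_mul_swap_of_descent (u * swap r q * swap p r) hrq 
        (by simpa [hp, hq] using hrq'.trans h)
      omega
    · have first := len_mul_swap_of_descent u hrq hrq'
      have last := len_mul_swap_le_of_covBy (u * swap r q * swap p r) hrq
      omega

theorem lt_len_mul_swap (u : Perm (Fin N)) {p q : Fin N} (hpq : p < q) (h : u p < u q) :
    len u < len (u * swap p q) := by
  simpa [mul_assoc] using len_mul_swap_lt (u * swap p q) hpq (by simpa using h)

theorem len_mul_swap_lt_iff (u : Perm (Fin N)) {p q : Fin N} (hpq : p < q) :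
    len (u * swap p q) < len u ↔ u q < u p := by
  refine ⟨fun h => ?_, len_mul_swap_lt u hpq⟩
  rcases ascent_or_descent u hpq with h' | h'
  · exact absurd h (lt_len_mul_swap u hpq h').not_gt
  · exact h'

theorem len_mul_swap_ne_of_between (u : Perm (Fin N)) {p r q : Fin N} (hpr : p < r) (hrq : r < q)
    (hupr : u p < u r) (hurq : u r < u q) : len (u * swap p q) ≠ len u + 1 := by
  have conj : u * swap p q = u * swap p r * swap r q * swap p r := by
    rw [mul_assoc, mul_assoc, ← mul_assoc (swap p r), swap_comm r q, swap_comm p r,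
      swap_mul_swap_mul_swap hrq.ne' (hpr.trans hrq).ne']
  have hq : swap p r q = q := swap_apply_of_ne_of_ne (hpr.trans hrq).ne' hrq.ne'
  have hp : swap r q p = p := swap_apply_of_ne_of_ne hpr.ne (hpr.trans hrq).ne
  have first := lt_len_mul_swap u hpr hupr
  have middle := lt_len_mul_swap (u * swap p r) hrq (by simpa [hq] using hupr.trans hurq)
  have last := lt_len_mul_swap (u * swap p r * swap r q) hpr (by simpa [hp, hq] using hurq)
  rw [conj]
  omega

theorem len_one : len (1 : Perm (Fin N)) = 0 := by
  rw [len, Finset.card_eq_zero, Finset.filter_eq_empty_iff]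
  exact fun x _ h => h.1.asymm h.2

theorem len_inv (u : Perm (Fin N)) : len u⁻¹ = len u := by
  simp only [len, Finset.card_filter]
  rw [← ((prodComm _ _).trans (prodCongr u u)).sum_comp]
  simp [and_comm]

theorem len_mul_swap_of_covBy_apply (u : Perm (Fin N)) {p q : Fin N} (hpq : p < q)
    (h : u p ⋖ u q) : len (u * swap p q) = len u + 1 := by
  have key : (u * swap p q)⁻¹ = u⁻¹ * swap (u p) (u q) := by
    simp [mul_swap_eq_swap_mul]
  rw [← len_inv, key, len_mul_swap_of_ascent _ h (by simpa using hpq), len_inv]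

theorem exists_descent (u : Perm (Fin N)) (hu : u ≠ 1) : ∃ p q : Fin N, p ⋖ q ∧ u q < u p := by
  by_contra! hcon
  have mono : StrictMono u := strictMono_of_lt_succ fun p hp =>
    (hcon p _ (Order.covBy_succ_of_not_isMax hp)).lt_of_ne
      (u.injective.ne (Order.lt_succ_of_not_isMax hp).ne)
  have same_range : Set.range u = Set.range id := by rw [u.surjective.range_eq, Set.range_id]
  exact hu (Equiv.coe_fn_injective ((mono.range_inj strictMono_id).1 same_range))

theorem descent_induction {motive : Perm (Fin N) → Prop} (one : motive 1)
    (step : ∀ u p q, p ⋖ q → u q < u p → motive (u * swap p q) → motive u) (u : Perm (Fin N)) :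
    motive u := by
  induction h : len u using Nat.strong_induction_on generalizing u with
  | _ L ih =>
    by_cases hu : u = 1
    · exact hu ▸ one
    · obtain ⟨p, q, hpq, hd⟩ := exists_descent u hu
      have := len_mul_swap_of_descent u hpq hd
      exact step u p q hpq hd (ih _ (by omega) _ rfl)

theorem len_eq_zero {u : Perm (Fin N)} (h : len u = 0) : u = 1 := by
  by_contra hu
  obtain ⟨p, q, hpq, hd⟩ := exists_descent u hu
  have := len_mul_swap_of_descent u hpq hd
  omega

theorem len_mul_le (u v : Perm (Fin N)) : len (u * v) ≤ len u + len v := by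
  induction v using descent_induction with
  | one => simp
  | step v p q hpq hd ih =>
    have := len_mul_swap_of_descent v hpq hd
    have := len_mul_swap_le_of_covBy (u * v * swap p q) hpq
    rw [mul_assoc, swap_mul_self, mul_one] at this 
    rw [← mul_assoc] at ih
    omega

theorem len_mul_w0 (u : Perm (Fin N)) : len u + len (u * w0 N) = len (w0 N) := by
  have reverse : len (u * w0 N) =
      (Finset.univ.filter fun x : Fin N × Fin N => x.1 < x.2 ∧ u x.1 < u x.2).card := by
    simp only [len, Finset.card_filter]
    rw [← ((prodComm _ _).trans (prodCongr (w0 N) (w0 N))).sum_comp]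
    simp [w0]
  have full : len (w0 N) = (Finset.univ.filter fun x : Fin N × Fin N => x.1 < x.2).card := by
    simp [len, w0]
  rw [reverse, full, len, ← Finset.card_union_of_disjoint]
  · congr 1
    ext x
    have := fun h : x.1 < x.2 => ascent_or_descent u h
    grind
  · exact Finset.disjoint_filter.2 fun x _ h h' => h.2.asymm h'.2

theorem eq_w0_of_len_eq {u : Perm (Fin N)} (h : len u = len (w0 N)) : u = w0 N := by
  have := len_mul_w0 u⁻¹
  rw [len_inv] at this
  exact inv_mul_eq_one.mp (len_eq_zero (by omega))

theorem len_le (u : Perm (Fin N)) : len u ≤ N * N :=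
  (Finset.card_le_univ _).trans (by simp)

end Length

section DividedDifferences

variable {σ R : Type*} [CommRing R]

theorem X_sub_X_ne_zero [Nontrivial R] {p q : σ} (h : p ≠ q) :
    (X p - X q : MvPolynomial σ R) ≠ 0 :=
  sub_ne_zero.2 fun e => h (X_injective e)

variable [DecidableEq σ]

theorem X_sub_X_dvd_sub_rename_swap (p q : σ) (f : MvPolynomial σ R) :
    X p - X q ∣ f - rename (swap p q) f := by
  induction f using MvPolynomial.induction_on with
  | C a => simp
  | add f g hf hg => simpa only [map_add, add_sub_add_comm] using dvd_add hf hg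
  | mul_X f j hf =>
    have split : f * X j - rename (swap p q) (f * X j) =
        (f - rename (swap p q) f) * X j + rename (swap p q) f * (X j - X (swap p q j)) := by
      rw [map_mul, rename_X]
      ring
    rw [split]
    refine dvd_add (hf.mul_right _) (Dvd.dvd.mul_left ?_ _)
    rw [swap_apply_def]
    split_ifs with hp hq
    · rw [hp]
    · rw [hq, ← neg_sub (X p), dvd_neg]
    · rw [sub_self]
      exact dvd_zero _

theorem rename_swap_rename_swap (p q : σ) (f : MvPolynomial σ R) :
    rename (swap p q) (rename (swap p q) f) = f := by
  rw [rename_rename, ← Perm.coe_mul, swap_mul_self, Perm.coe_one, rename_id_apply]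

variable [IsDomain R]

/-- The divided difference `f ↦ (f - s·f)/(x_p - x_q)`, where `s` interchanges the variables `x_p`
and `x_q`; for `p = q` it is taken to be zero. -/
noncomputable def dividedDiff (p q : σ) : Module.End R (MvPolynomial σ R) :=
  if h : p = q then 0 else
    { toFun := fun f => (X_sub_X_dvd_sub_rename_swap p q f).choose
      map_add' := fun f g => by
        refine mul_left_cancel₀ (X_sub_X_ne_zero h) ?_
        rw [mul_add, ← (X_sub_X_dvd_sub_rename_swap p q (f + g)).choose_spec,
          ← (X_sub_X_dvd_sub_rename_swap p q f).choose_spec,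
          ← (X_sub_X_dvd_sub_rename_swap p q g).choose_spec, map_add, add_sub_add_comm]
      map_smul' := fun a f => by
        refine mul_left_cancel₀ (X_sub_X_ne_zero h) ?_
        rw [mul_smul_comm, RingHom.id_apply,
          ← (X_sub_X_dvd_sub_rename_swap p q (a • f)).choose_spec,
          ← (X_sub_X_dvd_sub_rename_swap p q f).choose_spec, map_smul, smul_sub] }

theorem X_sub_X_mul_dividedDiff (p q : σ) (f : MvPolynomial σ R) :
    (X p - X q) * dividedDiff p q f = f - rename (swap p q) f := by
  rw [dividedDiff]
  split_ifs with h
  · simp [h]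
  · exact (X_sub_X_dvd_sub_rename_swap p q f).choose_spec.symm

theorem dividedDiff_eq_of_mul_eq {p q : σ} (h : p ≠ q) {f g : MvPolynomial σ R}
    (e : (X p - X q) * g = f - rename (swap p q) f) : dividedDiff p q f = g :=
  mul_left_cancel₀ (X_sub_X_ne_zero h) (by rw [X_sub_X_mul_dividedDiff, e])

theorem dividedDiff_mul {p q : σ} (h : p ≠ q) (f g : MvPolynomial σ R) :
    dividedDiff p q (f * g) = dividedDiff p q f * g + rename (swap p q) f * dividedDiff p q g := by
  apply dividedDiff_eq_of_mul_eq h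
  rw [map_mul]
  linear_combination g * X_sub_X_mul_dividedDiff p q f +
    rename (swap p q) f * X_sub_X_mul_dividedDiff p q g

theorem dividedDiff_eq_zero {p q : σ} (h : p ≠ q) {f : MvPolynomial σ R}
    (hf : rename (swap p q) f = f) : dividedDiff p q f = 0 :=
  dividedDiff_eq_of_mul_eq h (by rw [hf, sub_self, mul_zero])

theorem dividedDiff_mul_of_symm {p q : σ} (h : p ≠ q) {f : MvPolynomial σ R}
    (hf : rename (swap p q) f = f) (g : MvPolynomial σ R) :
    dividedDiff p q (f * g) = f * dividedDiff p q g := by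
  rw [dividedDiff_mul h, dividedDiff_eq_zero h hf, hf, zero_mul, zero_add]

theorem dividedDiff_X {p q : σ} (h : p ≠ q) (k : σ) :
    dividedDiff p q (X k : MvPolynomial σ R) = if k = p then 1 else if k = q then -1 else 0 := by
  apply dividedDiff_eq_of_mul_eq h
  rw [rename_X, swap_apply_def]
  split_ifs <;> simp [*]

theorem rename_swap_dividedDiff {p q : σ} (h : p ≠ q) (f : MvPolynomial σ R) :
    rename (swap p q) (dividedDiff p q f) = dividedDiff p q f := by
  refine (dividedDiff_eq_of_mul_eq h ?_).symm
  have := congrArg (rename (swap p q)) (X_sub_X_mul_dividedDiff p q f)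
  simp only [map_mul, map_sub, rename_X, swap_apply_left, swap_apply_right,
    rename_swap_rename_swap] at this
  linear_combination -this

theorem dividedDiff_mul_self {p q : σ} (h : p ≠ q) :
    dividedDiff p q * dividedDiff p q = (0 : Module.End R (MvPolynomial σ R)) :=
  LinearMap.ext fun f => dividedDiff_eq_zero h (rename_swap_dividedDiff h f)

theorem commute_dividedDiff {p q r s : σ} (hpq : p ≠ q) (hrs : r ≠ s) (hpr : p ≠ r) (hps : p ≠ s)
    (hqr : q ≠ r) (hqs : q ≠ s) :
    Commute (dividedDiff p q : Module.End R (MvPolynomial σ R)) (dividedDiff r s) := by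
  refine LinearMap.ext fun f => dividedDiff_eq_of_mul_eq hpq ?_
  apply mul_left_cancel₀ (X_sub_X_ne_zero hrs)
  have e₁ := X_sub_X_mul_dividedDiff r s (dividedDiff p q f)
  have e₂ := X_sub_X_mul_dividedDiff p q f
  have e₃ := X_sub_X_mul_dividedDiff r s f
  have e₄ := congrArg (rename (swap r s)) e₂
  have e₅ := congrArg (rename (swap p q)) e₃
  have swaps : ⇑(swap r s) ∘ ⇑(swap p q) = ⇑(swap p q) ∘ ⇑(swap r s) := by
    ext x
    simp only [Function.comp, swap_apply_def]
    grind
  simp only [map_mul, map_sub, rename_X, swap_apply_of_ne_of_ne hpr hps,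
    swap_apply_of_ne_of_ne hqr hqs, swap_apply_of_ne_of_ne hpr.symm hqr.symm,
    swap_apply_of_ne_of_ne hps.symm hqs.symm, rename_rename, swaps] at e₄ e₅
  linear_combination (X p - X q) * e₁ + e₂ - e₄ - e₃ + e₅

theorem dividedDiff_comm (p q : σ) :
    dividedDiff q p = -(dividedDiff p q : Module.End R (MvPolynomial σ R)) := by
  rcases eq_or_ne q p with rfl | h
  · simp [dividedDiff]
  refine LinearMap.ext fun f => dividedDiff_eq_of_mul_eq h ?_
  rw [swap_comm, LinearMap.neg_apply]
  linear_combination X_sub_X_mul_dividedDiff p q f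

theorem vandermonde_mul_dividedDiff_triple {p q r : σ} (hpq : p ≠ q) (hqr : q ≠ r) (hpr : p ≠ r)
    (f : MvPolynomial σ R) :
    (X p - X q) * (X p - X r) * (X q - X r) *
        dividedDiff p q (dividedDiff q r (dividedDiff p q f)) =
      f - rename (swap p q) f - rename (swap q r) f +
        rename (swap p q) (rename (swap q r) f) + rename (swap q r) (rename (swap p q) f) -
        rename (swap p r) f := by
  have outer := X_sub_X_mul_dividedDiff p q (dividedDiff q r (dividedDiff p q f))
  have middle := X_sub_X_mul_dividedDiff q r (dividedDiff p q f)
  have inner := X_sub_X_mul_dividedDiff p q f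
  have inner_qr := congrArg (rename (swap q r)) inner
  have middle_pq := congrArg (rename (swap p q)) middle
  have inner_qr_pq := congrArg (rename (swap p q)) inner_qr
  have conj : rename (swap p q) (rename (swap q r) (rename (swap p q) f)) =
      rename (swap p r) f := by
    simp only [rename_rename, ← Perm.coe_mul, ← mul_assoc]
    rw [swap_comm p q, swap_comm q r, swap_mul_swap_mul_swap hqr.symm hpr.symm]
  simp only [map_mul, map_sub, rename_X, swap_apply_left, swap_apply_right,
    rename_swap_dividedDiff hpq, swap_apply_of_ne_of_ne hpq hpr,
    swap_apply_of_ne_of_ne hpr.symm hqr.symm, conj] at inner_qr middle_pq inner_qr_pq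
  linear_combination (X p - X r) * (X q - X r) * outer + (X p - X r) * middle
    - (X q - X r) * middle_pq + inner - inner_qr + inner_qr_pq

theorem dividedDiff_braid {p q r : σ} (hpq : p ≠ q) (hqr : q ≠ r) (hpr : p ≠ r) :
    (dividedDiff p q * dividedDiff q r * dividedDiff p q : Module.End R (MvPolynomial σ R)) =
      dividedDiff q r * dividedDiff p q * dividedDiff q r := by
  refine LinearMap.ext fun f => mul_left_cancel₀
    (mul_ne_zero (mul_ne_zero (X_sub_X_ne_zero hpq) (X_sub_X_ne_zero hpr)) (X_sub_X_ne_zero hqr)) ?_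
  have left := vandermonde_mul_dividedDiff_triple hpq hqr hpr f
  have right := vandermonde_mul_dividedDiff_triple hqr.symm hpq.symm hpr.symm f
  simp only [dividedDiff_comm q r, dividedDiff_comm p q, swap_comm r q, swap_comm q p,
    swap_comm r p, LinearMap.neg_apply, map_neg] at right
  simp only [Module.End.mul_apply]
  linear_combination left - right

end DividedDifferences

section ReducedWords

variable {N : ℕ} [NeZero N]

theorem pos_val_add_one (p : Fin N) : pos N (p.val + 1) = p :=
  Fin.ext (by simp [pos, Nat.mod_eq_of_lt p.isLt])

theorem val_pos_add_one {j : ℕ} (h₁ : 1 ≤ j) (h₂ : j ≤ N) : (pos N j).val + 1 = j := by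
  simp only [pos]
  rw [Nat.mod_eq_of_lt (by omega), Nat.sub_add_cancel h₁]

theorem redWordAux_one (f : ℕ) : redWordAux N f 1 = [] := by
  cases f with
  | zero => rfl
  | succ f =>
    rw [redWordAux, List.find?_eq_none.2]
    intro i hi
    obtain ⟨j, hj, rfl⟩ := List.mem_map.1 hi
    have := List.mem_range.1 hj
    have := val_pos_add_one (N := N) (j := j + 1) (by omega) (by omega)
    have := val_pos_add_one (N := N) (j := j + 1 + 1) (by omega) (by omega)
    refine fun hdesc => absurd (of_decide_eq_true hdesc) ?_
    simp only [val, Perm.one_apply]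
    omega

theorem exists_redWordAux_succ {u : Perm (Fin N)} (hu : u ≠ 1) :
    ∃ i, pos N i ⋖ pos N (i + 1) ∧ u (pos N (i + 1)) < u (pos N i) ∧
      ∀ f, redWordAux N (f + 1) u =
        redWordAux N f (u * swap (pos N i) (pos N (i + 1))) ++ [i] := by
  cases hfind : ((List.range (N - 1)).map (· + 1)).find?
    (fun i => decide (val u (i + 1) < val u i)) with
  | none =>
    obtain ⟨p, q, hpq, hd⟩ := exists_descent u hu
    have hpq' : p.val + 1 = q.val := by simpa using hpq
    refine absurd ?_ (List.find?_eq_none.1 hfind (p.val + 1) (by simp; omega))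
    have hq : pos N (p.val + 1 + 1) = q := by rw [hpq', pos_val_add_one]
    simpa [val, hq, pos_val_add_one] using hd
  | some i =>
    obtain ⟨j, hj, rfl⟩ := List.mem_map.1 (List.mem_of_find?_eq_some hfind)
    have := List.mem_range.1 hj
    have := val_pos_add_one (N := N) (j := j + 1) (by omega) (by omega)
    have := val_pos_add_one (N := N) (j := j + 1 + 1) (by omega) (by omega)
    refine ⟨j + 1, ?_, ?_, fun f => by rw [redWordAux, hfind]; rfl⟩
    · rw [Fin.covBy_iff, Nat.covBy_iff_add_one_eq]
      omega
    · simpa [val] using List.find?_some hfind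

theorem redWordAux_congr {f f' : ℕ} {u : Perm (Fin N)} (h : len u ≤ f) (h' : len u ≤ f') :
    redWordAux N f u = redWordAux N f' u := by
  induction f generalizing f' u with
  | zero => rw [len_eq_zero (Nat.le_zero.1 h), redWordAux_one, redWordAux_one]
  | succ f ih =>
    by_cases hu : u = 1
    · rw [hu, redWordAux_one, redWordAux_one]
    obtain ⟨i, hi, hd, hword⟩ := exists_redWordAux_succ hu
    have hlen := len_mul_swap_of_descent u hi hd
    obtain ⟨f', rfl⟩ := Nat.exists_eq_add_one.2 (show 0 < f' by omega)
    rw [hword, hword, ih (f' := f') (by omega) (by omega)]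

theorem redWord_one : redWord N 1 = [] :=
  redWordAux_one _

theorem exists_redWord_eq_append {u : Perm (Fin N)} (hu : u ≠ 1) :
    ∃ i, pos N i ⋖ pos N (i + 1) ∧ u (pos N (i + 1)) < u (pos N i) ∧
      redWord N u = redWord N (u * swap (pos N i) (pos N (i + 1))) ++ [i] := by
  obtain ⟨i, hi, hd, hword⟩ := exists_redWordAux_succ hu
  have hlen := len_mul_swap_of_descent u hi hd
  refine ⟨i, hi, hd, ?_⟩
  rw [redWord, redWordAux_congr (len_le u) ((len_le u).trans (Nat.le_succ _)), hword,
    redWordAux_congr (f' := N * N) (by have := len_le u; omega) (len_le _), redWord]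

/-- The product over the canonical reduced word of `u` of the factors `T i (i + 1)`. -/
def wordProd {M : Type*} [Monoid M] (T : Fin N → Fin N → M) (u : Perm (Fin N)) : M :=
  ((redWord N u).map fun i => T (pos N i) (pos N (i + 1))).prod

/-- The factors `T i (i + 1)` satisfy the braid relations of the simple transpositions. -/
structure IsBraided {M : Type*} [Monoid M] (T : Fin N → Fin N → M) : Prop where
  commute : ∀ {p q r s}, p ⋖ q → r ⋖ s → q < r → Commute (T p q) (T r s)
  braid : ∀ {p q r}, p ⋖ q → q ⋖ r → T p q * T q r * T p q = T q r * T p q * T q r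

variable {M : Type*} [Monoid M] {T : Fin N → Fin N → M}

theorem wordProd_one : wordProd T 1 = 1 := by
  rw [wordProd, redWord_one, List.map_nil, List.prod_nil]

theorem exists_wordProd_eq (T : Fin N → Fin N → M) {u : Perm (Fin N)} (hu : u ≠ 1) :
    ∃ p q, p ⋖ q ∧ u q < u p ∧ wordProd T u = wordProd T (u * swap p q) * T p q := by
  obtain ⟨i, hi, hd, hword⟩ := exists_redWord_eq_append hu
  exact ⟨_, _, hi, hd, by simp [wordProd, hword]⟩

theorem wordProd_exchange_of_lt {u : Perm (Fin N)} {p q r s : Fin N} (hT : IsBraided T)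
    (ih : ∀ v, len v < len u → ∀ {a b}, a ⋖ b → v b < v a →
      wordProd T v = wordProd T (v * swap a b) * T a b)
    (hpq : p ⋖ q) (hrs : r ⋖ s) (hqr : q < r)
    (hd : u q < u p) (hd' : u s < u r) :
    wordProd T (u * swap p q) * T p q = wordProd T (u * swap r s) * T r s := by
  have hpr := (hpq.lt.trans hqr).ne
  have hps := (hpq.lt.trans (hqr.trans hrs.lt)).ne
  have hqs := (hqr.trans hrs.lt).ne
  have swaps : swap p q * swap r s = swap r s * swap p q :=
    (Perm.disjoint_swap_swap (by simp [hpq.lt.ne, hpr, hps, hqr.ne, hqs, hrs.lt.ne])).commute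
  rw [ih _ (len_mul_swap_lt u hpq.lt hd) hrs (by
      simpa [swap_apply_of_ne_of_ne, hpr.symm, hps.symm, hqr.ne', hqs.symm] using hd'),
    ih _ (len_mul_swap_lt u hrs.lt hd') hpq (by
      simpa [swap_apply_of_ne_of_ne, hpr, hps, hqr.ne, hqs] using hd),
    mul_assoc u, mul_assoc u, mul_assoc, mul_assoc, swaps, (hT.commute hpq hrs hqr).eq]

theorem wordProd_exchange_of_eq {u : Perm (Fin N)} {p q r : Fin N} (hT : IsBraided T)
    (ih : ∀ v, len v < len u → ∀ {a b}, a ⋖ b → v b < v a →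
      wordProd T v = wordProd T (v * swap a b) * T a b)
    (hpq : p ⋖ q) (hqr : q ⋖ r)
    (hd : u q < u p) (hd' : u r < u q) :
    wordProd T (u * swap p q) * T p q = wordProd T (u * swap q r) * T q r := by
  have hpr := (hpq.lt.trans hqr.lt).ne
  have hp : swap q r p = p := swap_apply_of_ne_of_ne hpq.ne hpr
  have hr : swap p q r = r := swap_apply_of_ne_of_ne hpr.symm hqr.ne'
  have l₁ := len_mul_swap_lt u hpq.lt hd
  have l₂ := len_mul_swap_lt u hqr.lt hd'
  have d₁ : (u * swap p q) r < (u * swap p q) q := by simpa [hr] using hd'.trans hd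
  have d₂ : (u * swap q r) q < (u * swap q r) p := by simpa [hp] using hd'.trans hd
  have swaps : swap p q * swap q r * swap p q = swap q r * swap p q * swap q r := by
    rw [swap_comm p q, swap_comm q r, swap_mul_swap_mul_swap hqr.ne' hpr.symm,
      swap_comm q p, swap_comm r q, swap_mul_swap_mul_swap hpq.ne hpr, swap_comm]
  rw [ih _ l₁ hqr d₁, ih _ (len_mul_swap_lt _ hqr.lt d₁ |>.trans l₁) hpq (by
      simpa [hp, hr] using hd'),
    ih _ l₂ hpq d₂, ih _ (len_mul_swap_lt _ hpq.lt d₂ |>.trans l₂) hqr (by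
      simpa [hp, hr] using hd)]
  simp only [mul_assoc] at swaps ⊢
  rw [swaps, ← mul_assoc (T p q), hT.braid hpq hqr, mul_assoc]

/- Matsumoto's theorem for the canonical words: any descent of `u` may be taken as its last
letter. -/
theorem wordProd_eq_of_descent (hT : IsBraided T) (u : Perm (Fin N)) {p q : Fin N} (hpq : p ⋖ q)
    (hd : u q < u p) : wordProd T u = wordProd T (u * swap p q) * T p q := by
  induction h : len u using Nat.strong_induction_on generalizing u p q with
  | _ L ih =>
    have ih' : ∀ v, len v < len u → ∀ {a b}, a ⋖ b → v b < v a →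
        wordProd T v = wordProd T (v * swap a b) * T a b :=
      fun v hv _ _ hab hv' => ih _ (h ▸ hv) v hab hv' rfl
    obtain ⟨r, s, hrs, hd', hu⟩ :=
      exists_wordProd_eq T (u := u) (by rintro rfl; exact hd.asymm hpq.lt)
    rw [hu]
    rcases lt_trichotomy r p with hrp | rfl | hpr
    · rcases (hrs.ge_of_gt hrp).lt_or_eq with hsp | rfl
      · exact wordProd_exchange_of_lt hT ih' hrs hpq hsp hd' hd
      · exact wordProd_exchange_of_eq hT ih' hrs hpq hd' hd
    · rw [hrs.unique_right hpq]
    · rcases (hpq.ge_of_gt hpr).lt_or_eq with hqr | rfl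
      · exact (wordProd_exchange_of_lt hT ih' hpq hrs hqr hd hd').symm
      · exact (wordProd_exchange_of_eq hT ih' hpq hrs hd hd').symm

end ReducedWords

section PermutationDividedDifferences

variable {N : ℕ}

theorem isBraided_dividedDiff : IsBraided
    (dividedDiff : Fin N → Fin N → Module.End ℤ (MvPolynomial (Fin N) ℤ)) where
  commute hpq hrs hqr := commute_dividedDiff hpq.lt.ne hrs.lt.ne (hpq.lt.trans hqr).ne
    (hpq.lt.trans (hqr.trans hrs.lt)).ne hqr.ne (hqr.trans hrs.lt).ne
  braid hpq hqr := dividedDiff_braid hpq.lt.ne hqr.lt.ne (hpq.lt.trans hqr.lt).ne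

variable [NeZero N]

/-- The divided difference operator `∂_u`, the product of the simple divided differences along the
canonical reduced word of `u`. -/
noncomputable def permDividedDiff (u : Perm (Fin N)) : Module.End ℤ (MvPolynomial (Fin N) ℤ) :=
  wordProd dividedDiff u

theorem divDiff_eq_dividedDiff {i : ℕ} (h : pos N i ≠ pos N (i + 1))
    (f : MvPolynomial (Fin N) ℤ) : divDiff i f = dividedDiff (pos N i) (pos N (i + 1)) f := by
  refine (dividedDiff_eq_of_mul_eq h ?_).symm
  have hdvd : X (pos N i) - X (pos N (i + 1)) ∣ f - rename (t N i (i + 1)) f :=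
    X_sub_X_dvd_sub_rename_swap _ _ f
  rw [divDiff, dif_pos hdvd]
  exact hdvd.choose_spec.symm

theorem divDiffWord_redWord (u : Perm (Fin N)) (f : MvPolynomial (Fin N) ℤ) :
    divDiffWord (redWord N u) f = permDividedDiff u f := by
  induction h : len u using Nat.strong_induction_on generalizing u f with
  | _ L ih =>
    by_cases hu : u = 1
    · simp [hu, redWord_one, permDividedDiff, wordProd_one, divDiffWord]
    obtain ⟨i, hi, hd, hword⟩ := exists_redWord_eq_append hu
    have ih' := ih _ (h ▸ len_mul_swap_lt u hi.lt hd) _ (divDiff i f) rfl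
    simp only [divDiffWord, permDividedDiff, wordProd, hword, List.foldr_append, List.foldr_cons,
      List.foldr_nil, List.map_append, List.map_cons, List.map_nil, List.prod_append,
      List.prod_singleton, Module.End.mul_apply] at ih' ⊢
    rw [ih', divDiff_eq_dividedDiff hi.lt.ne]

theorem permDividedDiff_one : (permDividedDiff 1 : Module.End ℤ (MvPolynomial (Fin N) ℤ)) = 1 :=
  wordProd_one

theorem permDividedDiff_of_descent (u : Perm (Fin N)) {p q : Fin N} (hpq : p ⋖ q)
    (hd : u q < u p) :
    permDividedDiff u = permDividedDiff (u * swap p q) * dividedDiff p q :=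
  wordProd_eq_of_descent isBraided_dividedDiff u hpq hd

theorem permDividedDiff_mul_dividedDiff (u : Perm (Fin N)) {p q : Fin N} (hpq : p ⋖ q) :
    permDividedDiff u * dividedDiff p q =
      if u p < u q then permDividedDiff (u * swap p q) else 0 := by
  split_ifs with h
  · rw [permDividedDiff_of_descent (u * swap p q) hpq (by simpa using h), mul_assoc u,
      swap_mul_self, mul_one]
  · have hd := (ascent_or_descent u hpq.lt).resolve_left h
    rw [permDividedDiff_of_descent u hpq hd, mul_assoc, dividedDiff_mul_self hpq.lt.ne, mul_zero]

theorem permDividedDiff_mul (u v : Perm (Fin N)) :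
    permDividedDiff u * permDividedDiff v =
      if len (u * v) = len u + len v then permDividedDiff (u * v) else 0 := by
  induction v using descent_induction with
  | one => simp [permDividedDiff_one, len_one]
  | step v p q hpq hd ih =>
    have hlen := len_mul_swap_of_descent v hpq hd
    have hle := len_mul_le u (v * swap p q)
    have hasc := len_mul_swap_of_ascent (u * v) hpq
    have hdesc := len_mul_swap_of_descent (u * v) hpq
    rw [permDividedDiff_of_descent v hpq hd, ← mul_assoc, ih, ite_mul, zero_mul,
      permDividedDiff_mul_dividedDiff _ hpq]
    rw [← mul_assoc] at hle
    rw [← mul_assoc u, mul_swap_mul_self]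
    rcases ascent_or_descent (u * v) hpq.lt with h | h
    · have := hasc h
      rw [if_neg (c := (_ : Fin N) < _) (by simpa using h.le), ite_self, if_neg (by omega)]
    · have := hdesc h
      rw [if_pos (c := (_ : Fin N) < _) (by simpa using h)]
      congr 1
      rw [eq_iff_iff]
      omega

theorem permDividedDiff_mul_of_isSymmetric (u : Perm (Fin N)) {f : MvPolynomial (Fin N) ℤ}
    (hf : f.IsSymmetric) (g : MvPolynomial (Fin N) ℤ) :
    permDividedDiff u (f * g) = f * permDividedDiff u g := by
  induction u using descent_induction generalizing g with
  | one => simp [permDividedDiff_one]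
  | step u p q hpq hd ih =>
    rw [permDividedDiff_of_descent u hpq hd, Module.End.mul_apply, Module.End.mul_apply,
      dividedDiff_mul_of_symm hpq.lt.ne (hf _), ih]

end PermutationDividedDifferences

section MonkRule

variable {N : ℕ}

theorem swap_mul_swap_conj {α : Type*} [DecidableEq α] (u : Perm α) (p q k b : α) :
    u * swap p q * swap (swap p q k) (swap p q b) = u * swap k b * swap p q := by
  rw [mul_assoc, mul_swap_eq_swap_mul, swap_apply_self, swap_apply_self, ← mul_assoc]

theorem len_mul_swap_descent_iff (u : Perm (Fin N)) {p q k b : Fin N} (hpq : p ⋖ q)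
    (hd : u q < u p) (hkb : k ≠ b) (hb : b ≠ swap p q k) :
    (len (u * swap k b * swap p q) + 1 = len (u * swap p q) ∧
      (u * swap k b) q < (u * swap k b) p) ↔ len (u * swap k b) + 1 = len u := by
  wlog hlt : k < b generalizing k b
  · rw [swap_comm k b]
    exact this hkb.symm (fun e => hb (by rw [e, swap_apply_self])) (hkb.lt_or_gt.resolve_left hlt)
  have hlen := len_mul_swap_of_descent u hpq hd
  rcases ascent_or_descent (u * swap k b) hpq.lt with h | h
  · have hlen' := len_mul_swap_of_ascent (u * swap k b) hpq h
    refine ⟨fun h' => absurd h'.2 h.asymm, fun h' => ?_⟩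
    have hinv := (len_mul_swap_lt_iff u hlt).1 (by omega)
    have hlt' := swap_lt_swap_of_covBy hpq hlt
      (by rintro ⟨rfl, rfl⟩; exact hb (swap_apply_left _ _).symm)
    have hdrop := (len_mul_swap_lt_iff (u * swap p q) hlt').2 (by simpa using hinv)
    rw [swap_mul_swap_conj] at hdrop
    omega
  · have hlen' := len_mul_swap_of_descent (u * swap k b) hpq h
    exact ⟨fun h' => by omega, fun h' => ⟨by omega, h⟩⟩

/-- The sign with which the transposition `t_{k,b}` enters the Monk rule for multiplication by
`x_k`. -/
def orientation (k b : Fin N) : ℤ := if k < b then 1 else if b < k then -1 else 0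

theorem orientation_self (k : Fin N) : orientation k k = 0 := by
  simp [orientation]

theorem orientation_swap {p q k b : Fin N} (hpq : p ⋖ q) (hkb : k ≠ b) (hb : b ≠ swap p q k) :
    orientation (swap p q k) (swap p q b) = orientation k b := by
  rcases hkb.lt_or_gt with h | h
  · have := swap_lt_swap_of_covBy hpq h
      (by rintro ⟨rfl, rfl⟩; exact hb (swap_apply_left _ _).symm)
    simp only [orientation, if_pos h, if_pos this]
  · have := swap_lt_swap_of_covBy hpq h
      (by rintro ⟨rfl, rfl⟩; exact hb (swap_apply_right _ _).symm)
    simp only [orientation, if_pos h, if_pos this, if_neg h.asymm, if_neg this.asymm]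

theorem dividedDiff_X_eq_orientation {R : Type*} [CommRing R] [IsDomain R] {p q : Fin N}
    (hpq : p < q) (k : Fin N) :
    dividedDiff p q (X k : MvPolynomial (Fin N) R) = (orientation k (swap p q k) : ℤ) := by
  rw [dividedDiff_X hpq.ne, orientation]
  split_ifs <;> simp_all [swap_apply_of_ne_of_ne, hpq.asymm]

variable [NeZero N]

/-- The contribution of the transposition `t_{k,b}` to the Monk rule for `∂_u`. -/
noncomputable def monkTerm (u : Perm (Fin N)) (k b : Fin N) :
    Module.End ℤ (MvPolynomial (Fin N) ℤ) :=
  if len (u * swap k b) + 1 = len u then orientation k b • permDividedDiff (u * swap k b) else 0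

theorem monkTerm_self (u : Perm (Fin N)) (k : Fin N) : monkTerm u k k = 0 := by
  rw [monkTerm, orientation_self, zero_smul, ite_self]

theorem monkTerm_of_descent (u : Perm (Fin N)) {p q : Fin N} (hpq : p ⋖ q) (hd : u q < u p)
    (k b : Fin N) :
    monkTerm u k b = monkTerm (u * swap p q) (swap p q k) (swap p q b) * dividedDiff p q +
      if b = swap p q k then orientation k b • permDividedDiff (u * swap p q) else 0 := by
  have hlen := len_mul_swap_of_descent u hpq hd
  rcases eq_or_ne k b with rfl | hkb
  · simp [monkTerm_self, orientation_self]
  by_cases hb : b = swap p q k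
  · have hswap : swap k b = swap p q := by
      obtain ⟨-, rfl | rfl⟩ := swap_apply_ne_self_iff.1 (hb ▸ hkb.symm)
      · rw [hb, swap_apply_left]
      · rw [hb, swap_apply_right, swap_comm]
    rw [if_pos hb, monkTerm, monkTerm, swap_mul_swap_conj, hswap, mul_swap_mul_self, if_pos hlen,
      if_neg (by omega), zero_mul, zero_add]
  · have key := len_mul_swap_descent_iff u hpq hd hkb hb
    rw [if_neg hb, add_zero, monkTerm, monkTerm, swap_mul_swap_conj, orientation_swap hpq hkb hb,
      ite_mul, zero_mul, smul_mul_assoc, permDividedDiff_mul_dividedDiff _ hpq, mul_swap_mul_self,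
      if_congr key.symm rfl rfl, ite_and, smul_ite, smul_zero]
    simp

theorem permDividedDiff_X_mul (u : Perm (Fin N)) (k : Fin N) (f : MvPolynomial (Fin N) ℤ) :
    permDividedDiff u (X k * f) = X (u k) * permDividedDiff u f + ∑ b, monkTerm u k b f := by
  induction u using descent_induction generalizing k f with
  | one => simp [permDividedDiff_one, monkTerm, len_one]
  | step u p q hpq hd ih =>
    have base : permDividedDiff (u * swap p q) ((orientation k (swap p q k) : ℤ) * f) =
        ∑ b, (if b = swap p q k then
          orientation k b • permDividedDiff (u * swap p q) else 0) f := by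
      rw [← LinearMap.sum_apply, Finset.sum_ite_eq', if_pos (Finset.mem_univ _), ← zsmul_eq_mul,
        map_zsmul, LinearMap.smul_apply]
    rw [permDividedDiff_of_descent u hpq hd, Module.End.mul_apply, dividedDiff_mul hpq.lt.ne,
      rename_X, map_add, ih, dividedDiff_X_eq_orientation hpq.lt, base,
      ← Equiv.sum_comp (swap p q) fun b => monkTerm _ _ b _]
    simp only [monkTerm_of_descent u hpq hd k, LinearMap.add_apply, Finset.sum_add_distrib,
      Module.End.mul_apply, Perm.mul_apply, swap_apply_self]
    abel

end MonkRule

section SchubertCoefficients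

variable {N : ℕ}

theorem lehmerCode_le_of_ascent (u : Perm (Fin N)) {p q : Fin N} (hpq : p ⋖ q) (h : u p < u q) :
    lehmerCode u p ≤ lehmerCode u q :=
  Finset.card_le_card <| Finset.monotone_filter_right _ fun j _ hj =>
    ⟨(hpq.ge_of_gt hj.1).lt_of_ne (by rintro rfl; exact h.asymm hj.2), hj.2.trans h⟩

theorem lehmerCode_one (i : Fin N) : lehmerCode 1 i = 0 := by
  rw [lehmerCode, Finset.card_eq_zero, Finset.filter_eq_empty_iff]
  exact fun j _ h => h.1.asymm h.2

theorem lehmerCode_w0 (i : Fin N) : lehmerCode (w0 N) i = N - 1 - i := by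
  rw [lehmerCode, ← Fin.card_Ioi]
  congr 1
  ext j
  simp [w0]

theorem exists_first_descent (u : Perm (Fin N)) (hu : u ≠ 1) :
    ∃ p q : Fin N, p ⋖ q ∧ u q < u p ∧ ∀ a, a ⋖ p → u a < u p := by
  obtain ⟨p, ⟨q, hpq, hd⟩, hmin⟩ := WellFounded.has_min wellFounded_lt
    {p : Fin N | ∃ q, p ⋖ q ∧ u q < u p} (exists_descent u hu)
  refine ⟨p, q, hpq, hd, fun a hap => ?_⟩
  exact (ascent_or_descent u hap.lt).resolve_right fun h => hmin a ⟨p, hap, h⟩ hap.lt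

theorem lehmerCode_mul_swap_apply_swap (u : Perm (Fin N)) {p q : Fin N} (hpq : p ⋖ q)
    (hd : u q < u p) (h : lehmerCode u p ≤ lehmerCode u q + 1) (i : Fin N) :
    lehmerCode (u * swap p q) (swap p q i) = lehmerCode (u * swap p q) i := by
  have hp := lehmerCode_eq_of_descent u hpq hd p
  have hq := lehmerCode_eq_of_descent u hpq hd q
  have hle := lehmerCode_le_of_ascent (u * swap p q) hpq (by simpa using hd)
  rw [swap_apply_left, if_pos rfl] at hp
  rw [swap_apply_right, if_neg hpq.lt.ne'] at hq
  rw [swap_apply_def]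
  split_ifs with hip hiq
  · subst hip
    omega
  · subst hiq
    omega
  · rfl

/-- The monomial whose exponent vector is the Lehmer code of `u`. -/
noncomputable def codeMonomial (u : Perm (Fin N)) : MvPolynomial (Fin N) ℤ :=
  ∏ i, X i ^ lehmerCode u i

/-- The operator moving functions on permutations along the covers `u s < u`, where `s` is the
transposition `t_{p,q}`: it sends `F` to the function `u ↦ F (u s)`, supported on the `u` for
which `u s` has length one less than `u`. -/
def downOp (p q : Fin N) : Module.End ℤ (Perm (Fin N) → ℤ) where
  toFun F u := if len (u * swap p q) + 1 = len u then F (u * swap p q) else 0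
  map_add' F G := by ext u; simp only [Pi.add_apply]; split_ifs <;> simp
  map_smul' a F := by ext u; simp

theorem downOp_apply (p q : Fin N) (F : Perm (Fin N) → ℤ) (u : Perm (Fin N)) :
    downOp p q F u = if len (u * swap p q) + 1 = len u then F (u * swap p q) else 0 :=
  rfl

variable [NeZero N]

theorem permDividedDiff_codeMonomial (u : Perm (Fin N))
    (h : ∀ p q, p ⋖ q → lehmerCode u q ≤ lehmerCode u p ∧ lehmerCode u p ≤ lehmerCode u q + 1) :
    permDividedDiff u (codeMonomial u) = 1 := by
  induction hL : len u using Nat.strong_induction_on generalizing u with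
  | _ L ih =>
    rcases eq_or_ne u 1 with rfl | hu
    · simp [permDividedDiff_one, codeMonomial, lehmerCode_one]
    obtain ⟨p, q, hpq, hd, hfirst⟩ := exists_first_descent u hu
    set v := u * swap p q with hv
    have code_u := lehmerCode_eq_of_descent u hpq hd
    have code_v := lehmerCode_mul_swap_apply_swap u hpq hd (h p q hpq).2
    rw [← hv] at code_u code_v
    simp only [code_v] at code_u
    have hsymm : rename (swap p q) (codeMonomial v) = codeMonomial v := by
      rw [codeMonomial, map_prod, ← Equiv.prod_comp (swap p q)]
      simp [code_v]
    have hsplit : codeMonomial u = codeMonomial v * X p := by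
      simp only [codeMonomial, code_u, pow_add, Finset.prod_mul_distrib, pow_ite, pow_one, pow_zero,
        Finset.prod_ite_eq', Finset.mem_univ, if_true]
    rw [permDividedDiff_of_descent u hpq hd, Module.End.mul_apply, hsplit,
      dividedDiff_mul_of_symm hpq.lt.ne hsymm, dividedDiff_X hpq.lt.ne, if_pos rfl, mul_one]
    refine ih _ (hL ▸ len_mul_swap_lt u hpq.lt hd) v (fun a b hab => ?_) rfl
    have := h a b hab
    have ha := code_u a
    have hb := code_u b
    by_cases hap : a = p
    · subst hap
      obtain rfl := hab.unique_right hpq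
      have := code_v a
      simp only [swap_apply_left, if_pos, if_neg hab.lt.ne'] at this ha hb
      omega
    · rw [if_neg hap] at ha
      split_ifs at hb with hbp
      · subst hbp
        have := lehmerCode_le_of_ascent u hab (hfirst a hab)
        omega
      · omega

theorem permDividedDiff_staircase : permDividedDiff (w0 N) (staircase N) = 1 := by
  have := permDividedDiff_codeMonomial (w0 N) fun p q hpq => by
    have := Nat.covBy_iff_add_one_eq.1 (Fin.covBy_iff.1 hpq)
    rw [lehmerCode_w0, lehmerCode_w0]
    omega
  simpa only [codeMonomial, lehmerCode_w0, staircase] using this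

/-- The coefficients of the class of `f` in the Schubert basis, extracted by the functionals dual
to that basis: the coefficient at `u` is the constant term of `∂_u f`. -/
noncomputable def schubertCoeff : MvPolynomial (Fin N) ℤ →ₗ[ℤ] (Perm (Fin N) → ℤ) where
  toFun f u := constantCoeff (permDividedDiff u f)
  map_add' f g := by ext u; simp
  map_smul' a f := by ext u; rw [map_smul]; simp

theorem schubertCoeff_apply (f : MvPolynomial (Fin N) ℤ) (u : Perm (Fin N)) :
    schubertCoeff f u = constantCoeff (permDividedDiff u f) :=
  rfl

theorem schubertCoeff_X_mul (k : Fin N) (f : MvPolynomial (Fin N) ℤ) :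
    schubertCoeff (X k * f) = ∑ b, orientation k b • downOp k b (schubertCoeff f) := by
  ext u
  simp only [schubertCoeff_apply, permDividedDiff_X_mul, map_add, map_mul, constantCoeff_X,
    zero_mul, zero_add, map_sum, Finset.sum_apply, Pi.smul_apply, downOp_apply]
  refine Finset.sum_congr rfl fun b _ => ?_
  rw [monkTerm]
  split_ifs <;> simp

theorem schubertCoeff_C (a : ℤ) : schubertCoeff (C a : MvPolynomial (Fin N) ℤ) = Pi.single 1 a := by
  ext u
  rw [schubertCoeff_apply, ← mul_one (C a),
    permDividedDiff_mul_of_isSymmetric u (IsSymmetric.C a)]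
  rcases eq_or_ne u 1 with rfl | hu
  · simp [permDividedDiff_one]
  obtain ⟨p, q, hpq, hd⟩ := exists_descent u hu
  rw [permDividedDiff_of_descent u hpq hd, Module.End.mul_apply,
    dividedDiff_eq_zero hpq.lt.ne (map_one _), map_zero]
  simp [hu]

theorem schubertCoeff_mul_eq_zero {f : MvPolynomial (Fin N) ℤ} (hf : schubertCoeff f = 0)
    (g : MvPolynomial (Fin N) ℤ) : schubertCoeff (g * f) = 0 := by
  induction g using MvPolynomial.induction_on with
  | C a => rw [← smul_eq_C_mul, map_smul, hf, smul_zero]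
  | add g g' hg hg' => rw [add_mul, map_add, hg, hg', add_zero]
  | mul_X g i hg =>
    rw [mul_comm g, mul_assoc, schubertCoeff_X_mul, hg]
    simp

theorem schubertCoeff_eq_zero_of_mem_symIdeal {f : MvPolynomial (Fin N) ℤ} (hf : f ∈ symIdeal N) :
    schubertCoeff f = 0 := by
  induction hf using Submodule.span_induction with
  | mem f hf =>
    ext u
    rw [schubertCoeff_apply, ← mul_one f, permDividedDiff_mul_of_isSymmetric u hf.1, map_mul, hf.2,
      zero_mul, Pi.zero_apply]
  | zero => exact map_zero _
  | add f g _ _ hf hg => rw [map_add, hf, hg, add_zero]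
  | smul g f _ hf => exact schubertCoeff_mul_eq_zero hf g

theorem exists_schubertCoeff_monomial_eq_zero (s : Fin N →₀ ℕ) (a : ℤ) :
    ∃ d, ∀ u : Perm (Fin N), len u ≠ d → schubertCoeff (monomial s a) u = 0 := by
  refine MvPolynomial.induction_on_monomial
    (motive := fun f => ∃ d, ∀ u : Perm (Fin N), len u ≠ d → schubertCoeff f u = 0) ?_ ?_ s a
  · refine fun a => ⟨0, fun u hu => ?_⟩
    rw [schubertCoeff_C, Pi.single_eq_of_ne]
    rintro rfl
    exact hu len_one
  · rintro f i ⟨d, hd⟩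
    refine ⟨d + 1, fun u hu => ?_⟩
    rw [mul_comm, schubertCoeff_X_mul, Finset.sum_apply]
    refine Finset.sum_eq_zero fun b _ => ?_
    rw [Pi.smul_apply, downOp_apply]
    split_ifs
    · rw [hd _ (by omega), smul_zero]
    · exact smul_zero _

theorem schubertCoeff_staircase : schubertCoeff (staircase N) = Pi.single (w0 N) 1 := by
  have htop : schubertCoeff (staircase N) (w0 N) = 1 := by
    rw [schubertCoeff_apply, permDividedDiff_staircase, map_one]
  have hmon : staircase N = monomial (Finsupp.equivFunOnFinite.symm fun i => N - 1 - i.val) 1 := by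
    simp [staircase, monomial_eq, Finsupp.prod_fintype]
  obtain ⟨d, hd⟩ := exists_schubertCoeff_monomial_eq_zero (N := N)
    (Finsupp.equivFunOnFinite.symm fun i => N - 1 - i.val) 1
  rw [← hmon] at hd
  obtain rfl : len (w0 N) = d := by
    by_contra hne
    exact one_ne_zero (htop.symm.trans (hd _ hne))
  ext u
  rcases eq_or_ne u (w0 N) with rfl | hu
  · rw [htop, Pi.single_eq_same]
  · rw [hd u fun h => hu (eq_w0_of_len_eq h), Pi.single_eq_of_ne hu]

theorem schubertCoeff_schubertPoly (w : Perm (Fin N)) :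
    schubertCoeff (schubertPoly N w) = Pi.single w 1 := by
  ext u
  have hword : schubertCoeff (schubertPoly N w) u =
      constantCoeff ((permDividedDiff u * permDividedDiff (w⁻¹ * w0 N)) (staircase N)) := by
    rw [schubertCoeff_apply, schubertPoly, divDiffWord_redWord, Module.End.mul_apply]
  have htop : u * (w⁻¹ * w0 N) = w0 N ↔ u = w := by
    rw [← mul_assoc, mul_eq_right, mul_inv_eq_one]
  rw [hword, permDividedDiff_mul]
  split_ifs with hlen
  · rw [← schubertCoeff_apply, schubertCoeff_staircase, Pi.single_apply, Pi.single_apply]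
    simp only [htop]
  · rw [Pi.single_eq_of_ne, LinearMap.zero_apply, map_zero]
    rintro rfl
    refine hlen ?_
    rw [htop.2 rfl, ← len_mul_w0 u⁻¹, len_inv]

end SchubertCoefficients

section NoncommutativeElementary

variable {E : Type*}

/-- The noncommutative elementary symmetric polynomial of degree `m` in `A 0, …, A (V - 1)`: the
sum of the products `A v₁ ⋯ A v_m` over `V > v₁ > ⋯ > v_m`. -/
def ncEsymm [Semiring E] (A : ℕ → E) : ℕ → ℕ → E
  | _, 0 => 1
  | 0, _ + 1 => 0
  | V + 1, m + 1 => ncEsymm A V (m + 1) + A V * ncEsymm A V m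

theorem ncEsymm_zero_right [Semiring E] (A : ℕ → E) (V : ℕ) : ncEsymm A V 0 = 1 := by
  cases V <;> rfl

theorem ncEsymm_eq_zero [Semiring E] {A : ℕ → E} {V : ℕ} (h : ∀ v, A v = 0) (m : ℕ) :
    ncEsymm A V (m + 1) = 0 := by
  induction V with
  | zero => rfl
  | succ V ih => rw [ncEsymm, ih, h, zero_mul, add_zero]

theorem mul_ncEsymm_eq_ncEsymm_mul [Semiring E] {A A' : ℕ → E} {B : E} {V : ℕ}
    (h : ∀ v < V, B * A v = A' v * B) (m : ℕ) : B * ncEsymm A V m = ncEsymm A' V m * B := by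
  induction V generalizing m with
  | zero => cases m <;> simp [ncEsymm]
  | succ V ih =>
    have ih := ih fun v hv => h v (hv.trans V.lt_succ_self)
    cases m with
    | zero => simp [ncEsymm]
    | succ m =>
      rw [ncEsymm, ncEsymm, mul_add, add_mul, ih, ← mul_assoc, h V V.lt_succ_self, mul_assoc, ih,
        mul_assoc]

theorem ncEsymm_succ_eq [Ring E] {A A' : ℕ → E} {n : ℕ}
    (intertwine : ∀ V < n, ∀ v < V, (A' V - A V) * A v = A' v * (A' V - A V))
    (annihilate : ∀ V < n, A' V * (A' V - A V) = 0) (m : ℕ) :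
    ncEsymm A' n (m + 1) = ncEsymm A n (m + 1) +
      ncEsymm A' n m * ∑ v ∈ Finset.range n, (A' v - A v) := by
  induction n generalizing m with
  | zero => simp [ncEsymm]
  | succ n ih =>
    have ih := ih (fun V hV => intertwine V (hV.trans n.lt_succ_self))
      (fun V hV => annihilate V (hV.trans n.lt_succ_self))
    have move := mul_ncEsymm_eq_ncEsymm_mul (intertwine n n.lt_succ_self)
    rw [Finset.sum_range_succ, mul_add]
    cases m with
    | zero =>
      have ih₀ := ih 0
      simp only [ncEsymm, ncEsymm_zero_right, one_mul, mul_one] at ih₀ ⊢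
      rw [ih₀]
      abel
    | succ m =>
      have vanish : A' n * ncEsymm A' n m * (A' n - A n) = 0 := by
        rw [mul_assoc, ← move, ← mul_assoc, annihilate n n.lt_succ_self, zero_mul]
      have ih' := congrArg (A' n * ·) (ih m)
      simp only [mul_add] at ih'
      have move := move (m + 1)
      simp only [ncEsymm] at move ⊢
      rw [add_mul, add_mul, vanish, ← move, ih (m + 1), sub_mul, mul_assoc (A' n), ih']
      abel

end NoncommutativeElementary

section LabelOperators

variable {N : ℕ}

theorem downOp_comm (p q : Fin N) : downOp p q = downOp q p :=
  LinearMap.ext fun F => funext fun u => by rw [downOp_apply, downOp_apply, swap_comm]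

theorem downOp_congr {F G : Perm (Fin N) → ℤ} {u : Perm (Fin N)} {p q : Fin N}
    (h : F (u * swap p q) = G (u * swap p q)) : downOp p q F u = downOp p q G u := by
  rw [downOp_apply, downOp_apply, h]

theorem downOp_downOp_apply {a b c d : Fin N} (hab : a < b) (hcd : c < d)
    (F : Perm (Fin N) → ℤ) (u : Perm (Fin N)) :
    downOp a b (downOp c d F) u =
      if u b < u a ∧ (u * swap a b) d < (u * swap a b) c ∧
        len (u * swap a b * swap c d) + 2 = len u then F (u * swap a b * swap c d) else 0 := by
  have first := len_mul_swap_lt_iff u hab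
  have second := len_mul_swap_lt_iff (u * swap a b) hcd
  rw [downOp_apply, downOp_apply, ← ite_and]
  congr 1
  rw [eq_iff_iff, ← first, ← second]
  omega

theorem downOp_eq_zero_of_lt {u : Perm (Fin N)} {p q : Fin N} (hpq : p < q) (h : u p < u q)
    (F : Perm (Fin N) → ℤ) : downOp p q F u = 0 := by
  have := len_mul_swap_lt_iff u hpq
  have := h.not_gt
  rw [downOp_apply, if_neg (by omega)]

theorem downOp_exchange {u : Perm (Fin N)} {a b p r : Fin N} (hab : a < b) (hpr : p < r)
    (hswap : swap a b p < swap a b r)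
    (h : u r < u p → (u b < u a ↔ u (swap p r b) < u (swap p r a))) (F : Perm (Fin N) → ℤ) :
    downOp a b (downOp (swap a b p) (swap a b r) F) u = downOp p r (downOp a b F) u := by
  rw [downOp_downOp_apply hab hswap, downOp_downOp_apply hpr hab, swap_mul_swap_conj]
  simp only [Perm.mul_apply, swap_apply_self]
  congr 1
  rw [eq_iff_iff]
  tauto

/-- The sum of the operators of the covers `u t_{p,q} < u` of the `k`-Bruhat order with label `V`,
the label of this cover being the value `u(p)`. Positions and values are counted from zero, so that
the positions on the left of the cut are `0, …, k - 1`. -/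
def labelOp (N k V : ℕ) : Module.End ℤ (Perm (Fin N) → ℤ) where
  toFun F u := ∑ p : Fin N, ∑ q : Fin N,
    if (u p).val = V then if p.val < k ∧ k ≤ q.val then downOp p q F u else 0 else 0
  map_add' F G := by
    ext u
    simp only [map_add, Pi.add_apply, ← Finset.sum_add_distrib, ← ite_add_zero]
  map_smul' a F := by
    ext u
    simp only [map_smul, Pi.smul_apply, Finset.smul_sum, smul_ite, smul_zero, RingHom.id_apply]

theorem labelOp_apply (k : ℕ) {V : ℕ} (F : Perm (Fin N) → ℤ) {u : Perm (Fin N)} {p : Fin N}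
    (hp : (u p).val = V) :
    labelOp N k V F u = ∑ q : Fin N, if p.val < k ∧ k ≤ q.val then downOp p q F u else 0 := by
  have unique (p') (hp' : p' ≠ p) : (u p').val ≠ V := fun h =>
    hp' (u.injective (Fin.ext (h.trans hp.symm)))
  change (∑ p', ∑ q, if (u p').val = V then _ else 0) = _
  rw [Finset.sum_eq_single_of_mem p (Finset.mem_univ _)
    fun p' _ hp' => Finset.sum_eq_zero fun q _ => if_neg (unique p' hp')]
  simp only [if_pos hp]

theorem exists_apply_val_eq (u : Perm (Fin N)) {V : ℕ} (hV : V < N) : ∃ p, (u p).val = V :=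
  ⟨u⁻¹ ⟨V, hV⟩, by simp⟩

/-- The change of `labelOp` when the position `M` (counted from zero) joins the positions on the
left of the cut. -/
def labelOpStep (M : Fin N) (V : ℕ) : Module.End ℤ (Perm (Fin N) → ℤ) :=
  labelOp N (M + 1) V - labelOp N M V

theorem labelOpStep_apply_of_lt {M P : Fin N} (hPM : P < M) {u : Perm (Fin N)} {V : ℕ}
    (hP : (u P).val = V) (F : Perm (Fin N) → ℤ) : labelOpStep M V F u = -downOp P M F u := by
  rw [labelOpStep, LinearMap.sub_apply, Pi.sub_apply, labelOp_apply _ F hP, labelOp_apply _ F hP,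
    ← Finset.sum_sub_distrib, Finset.sum_eq_single_of_mem M (Finset.mem_univ _)]
  · rw [if_neg (by omega), if_pos ⟨hPM, le_rfl⟩, zero_sub]
  · intro q _ hqM
    simp only [show P.val < M.val + 1 ∧ M.val + 1 ≤ q.val ↔ P.val < M.val ∧ M.val ≤ q.val by omega,
      sub_self]

theorem labelOpStep_apply_self {M : Fin N} {u : Perm (Fin N)} {V : ℕ} (hM : (u M).val = V)
    (F : Perm (Fin N) → ℤ) :
    labelOpStep M V F u = ∑ Q ∈ Finset.Ioi M, downOp M Q F u := by
  rw [labelOpStep, LinearMap.sub_apply, Pi.sub_apply, labelOp_apply _ F hM, labelOp_apply _ F hM,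
    ← Finset.sum_sub_distrib, ← Finset.filter_lt_eq_Ioi, Finset.sum_filter]
  refine Finset.sum_congr rfl fun q _ => ?_
  simp only [lt_irrefl, false_and, if_false, sub_zero,
    show M.val < M.val + 1 ∧ M.val + 1 ≤ q.val ↔ M < q by omega]

theorem labelOpStep_apply_of_gt {M P : Fin N} (hMP : M < P) {u : Perm (Fin N)} {V : ℕ}
    (hP : (u P).val = V) (F : Perm (Fin N) → ℤ) : labelOpStep M V F u = 0 := by
  rw [labelOpStep, LinearMap.sub_apply, Pi.sub_apply, labelOp_apply _ F hP, labelOp_apply _ F hP,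
    ← Finset.sum_sub_distrib]
  refine Finset.sum_eq_zero fun q _ => ?_
  rw [if_neg (by omega), if_neg (by omega), sub_zero]

theorem labelOp_mul_labelOpStep (M : Fin N) {V : ℕ} (hV : V < N) :
    labelOp N (M + 1) V * labelOpStep M V = 0 := by
  refine LinearMap.ext fun F => funext fun u => ?_
  obtain ⟨P, hP⟩ := exists_apply_val_eq u hV
  rw [Module.End.mul_apply, labelOp_apply _ _ hP]
  refine Finset.sum_eq_zero fun r _ => ?_
  split_ifs with h
  · have moved := labelOpStep_apply_of_gt (M := M) (u := u * swap P r) (P := r) (V := V) (by omega)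
      (by simpa) F
    simp [downOp_apply, moved]
  · rfl

theorem downOp_labelOp_apply (a b : Fin N) {k v : ℕ} {u : Perm (Fin N)} {p : Fin N}
    (hp : (u p).val = v) (F : Perm (Fin N) → ℤ) :
    downOp a b (labelOp N k v F) u = ∑ r, if (swap a b p).val < k ∧ k ≤ (swap a b r).val then
      downOp a b (downOp (swap a b p) (swap a b r) F) u else 0 := by
  have moved : ((u * swap a b) (swap a b p)).val = v := by simp [hp]
  rw [downOp_apply, labelOp_apply k F moved, ← Equiv.sum_comp (swap a b)]
  simp only [downOp_apply a b]
  split_ifs <;> simp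

theorem labelOpStep_labelOp_apply_of_lt {M P p : Fin N} {v V : ℕ} {u : Perm (Fin N)} (hvV : v < V)
    (hP : (u P).val = V) (hp : (u p).val = v) (hPM : P < M) (F : Perm (Fin N) → ℤ) :
    labelOpStep M V (labelOp N M v F) u = labelOp N (M + 1) v (labelOpStep M V F) u := by
  have hpP : p ≠ P := by rintro rfl; omega
  have hup : u p < u P := by omega
  rw [labelOpStep_apply_of_lt hPM hP, downOp_labelOp_apply _ _ hp, labelOp_apply _ _ hp,
    ← Finset.sum_neg_distrib]
  refine Finset.sum_congr rfl fun r _ => ?_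
  have position : (swap P M p).val < M.val ↔ p.val < M.val + 1 := by
    rw [swap_apply_def]
    split_ifs <;> omega
  by_cases hr : M < r
  · have hPr : P ≠ r := (hPM.trans hr).ne
    have swap_r : swap P M r = r := swap_apply_of_ne_of_ne hPr.symm hr.ne'
    have step : downOp p r (labelOpStep M V F) u = downOp p r (-downOp P M F) u :=
      downOp_congr (labelOpStep_apply_of_lt hPM
        (by simpa [swap_apply_of_ne_of_ne hpP.symm hPr] using hP) F)
    simp only [position, swap_r, Nat.succ_le_iff, hr.le, Fin.val_fin_le, Fin.val_fin_lt, hr,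
      and_true]
    split_ifs with hpM
    · have exchange := downOp_exchange hPM (u := u) (p := p) (r := r) (by omega) (by omega)
        (fun h => by
          rw [swap_apply_of_ne_of_ne hpP.symm hPr]
          rcases eq_or_ne M p with rfl | hMp
          · rw [swap_apply_left]
            exact iff_of_true hup (h.trans hup)
          · rw [swap_apply_of_ne_of_ne hMp hr.ne]) F
      rw [step, map_neg, Pi.neg_apply, ← exchange, swap_r]
    · rfl
  · rw [if_neg (c := p.val < M.val + 1 ∧ _) (by omega), neg_eq_zero]
    split_ifs with h
    · obtain rfl : r = P := by
        by_contra hrP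
        rw [swap_apply_def P M r, if_neg hrP] at h
        split_ifs at h <;> omega
      rw [swap_apply_left] at h ⊢
      rw [downOp_apply, downOp_eq_zero_of_lt h.1 (by simpa using hup), ite_self]
    · rfl

theorem labelOpStep_labelOp_apply_self {M p : Fin N} {v V : ℕ} {u : Perm (Fin N)} (hvV : v < V)
    (hM : (u M).val = V) (hp : (u p).val = v) (F : Perm (Fin N) → ℤ) :
    labelOpStep M V (labelOp N M v F) u = labelOp N (M + 1) v (labelOpStep M V F) u := by
  have hpM : p ≠ M := by rintro rfl; omega
  have hup : u p < u M := by omega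
  simp only [labelOpStep_apply_self hM, downOp_labelOp_apply _ _ hp, labelOp_apply _ _ hp]
  rw [Finset.sum_comm]
  refine Finset.sum_congr rfl fun r _ => ?_
  split_ifs with h
  · have hMr : M < r := by omega
    have hpM : p < M := by omega
    have step : downOp p r (labelOpStep M V F) u =
        downOp p r (∑ Q ∈ Finset.Ioi M, downOp M Q F) u :=
      downOp_congr (by
        rw [labelOpStep_apply_self (by simpa [swap_apply_of_ne_of_ne hpM.ne' hMr.ne] using hM),
          Finset.sum_apply])
    rw [step, map_sum, Finset.sum_apply]
    refine Finset.sum_congr rfl fun Q hQ => ?_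
    have hMQ : M < Q := Finset.mem_Ioi.1 hQ
    have swap_p : swap M Q p = p := swap_apply_of_ne_of_ne hpM.ne (hpM.trans hMQ).ne
    have swap_r : M ≤ swap M Q r := by
      rw [swap_apply_def]
      split_ifs <;> omega
    rw [if_pos ⟨by rwa [swap_p], swap_r⟩]
    refine downOp_exchange hMQ (hpM.trans hMr) (by rw [swap_p]; exact hpM.trans_le swap_r)
      (fun hrp => ?_) F
    rw [swap_apply_of_ne_of_ne hpM.ne' hMr.ne]
    rcases eq_or_ne Q r with rfl | hQr
    · rw [swap_apply_right]
      exact iff_of_true (hrp.trans hup) hup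
    · rw [swap_apply_of_ne_of_ne (hpM.trans hMQ).ne' hQr]
  · refine Finset.sum_eq_zero fun Q hQ => ?_
    have hMQ : M < Q := Finset.mem_Ioi.1 hQ
    split_ifs with h'
    · obtain rfl : r = M := by
        rw [swap_apply_def, swap_apply_def] at h'
        split_ifs at h' <;> omega
      rw [downOp_apply, downOp_eq_zero_of_lt (by omega) (by simpa using hup), ite_self]
    · rfl

theorem labelOpStep_labelOp_apply_of_gt {M P p : Fin N} {v V : ℕ} {u : Perm (Fin N)} (hvV : v < V)
    (hP : (u P).val = V) (hp : (u p).val = v) (hMP : M < P) (F : Perm (Fin N) → ℤ) :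
    labelOpStep M V (labelOp N M v F) u = labelOp N (M + 1) v (labelOpStep M V F) u := by
  rw [labelOpStep_apply_of_gt hMP hP, labelOp_apply _ _ hp]
  refine (Finset.sum_eq_zero fun r _ => ?_).symm
  have hpP : P ≠ p := by rintro rfl; omega
  split_ifs with h
  · rcases eq_or_ne P r with rfl | hPr
    · exact downOp_eq_zero_of_lt (by omega) (by omega) _
    · have moved := labelOpStep_apply_of_gt hMP (u := u * swap p r) (V := V)
        (by simpa [swap_apply_of_ne_of_ne hpP hPr] using hP) F
      simp [downOp_apply, moved]
  · rfl

theorem labelOpStep_mul_labelOp (M : Fin N) {v V : ℕ} (hvV : v < V) (hV : V < N) :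
    labelOpStep M V * labelOp N M v = labelOp N (M + 1) v * labelOpStep M V := by
  refine LinearMap.ext fun F => funext fun u => ?_
  obtain ⟨P, hP⟩ := exists_apply_val_eq u hV
  obtain ⟨p, hp⟩ := exists_apply_val_eq u (hvV.trans hV)
  rcases lt_trichotomy P M with hPM | rfl | hMP
  · exact labelOpStep_labelOp_apply_of_lt hvV hP hp hPM F
  · exact labelOpStep_labelOp_apply_self hvV hP hp F
  · exact labelOpStep_labelOp_apply_of_gt hvV hP hp hMP F

theorem sum_labelOpStep (M : Fin N) :
    ∑ v ∈ Finset.range N, labelOpStep M v = ∑ b, orientation M b • downOp M b := by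
  refine LinearMap.ext fun F => funext fun u => ?_
  have step (P : Fin N) : labelOpStep M (u P) F u = (if P < M then -downOp M P F u else 0) +
      if P = M then ∑ Q ∈ Finset.Ioi M, downOp M Q F u else 0 := by
    rcases lt_trichotomy P M with hPM | rfl | hMP
    · rw [labelOpStep_apply_of_lt hPM rfl, if_pos hPM, if_neg hPM.ne, add_zero, downOp_comm]
    · rw [labelOpStep_apply_self rfl, if_neg (lt_irrefl _), if_pos rfl, zero_add]
    · rw [labelOpStep_apply_of_gt hMP rfl, if_neg hMP.asymm, if_neg hMP.ne', add_zero]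
  simp only [LinearMap.sum_apply, Finset.sum_apply, Finset.sum_range, LinearMap.smul_apply,
    Pi.smul_apply]
  rw [← Equiv.sum_comp u, Finset.sum_congr rfl fun P _ => step P, Finset.sum_add_distrib,
    Finset.sum_ite_eq' _ _ fun _ => _, if_pos (Finset.mem_univ _), ← Finset.filter_lt_eq_Ioi,
    Finset.sum_filter, ← Finset.sum_add_distrib]
  refine Finset.sum_congr rfl fun b _ => ?_
  rw [orientation]
  split_ifs <;> first | omega | simp

end LabelOperators

section CompleteHomogeneous

theorem sum_sym_insert {α R : Type*} [DecidableEq α] [CommSemiring R] (x : α → R) {a : α}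
    {s : Finset α} (ha : a ∉ s) (m : ℕ) :
    ∑ σ ∈ (insert a s).sym (m + 1), (Multiset.map x σ).prod =
      ∑ σ ∈ s.sym (m + 1), (Multiset.map x σ).prod +
        x a * ∑ σ ∈ (insert a s).sym m, (Multiset.map x σ).prod := by
  have split : (insert a s).sym (m + 1) =
      s.sym (m + 1) ∪ ((insert a s).sym m).image (a ::ₛ ·) := by
    ext σ
    simp only [Finset.mem_union, Finset.mem_image, Finset.mem_sym_iff]
    constructor
    · intro h
      by_cases haσ : a ∈ σ
      · obtain ⟨τ, rfl⟩ := Sym.exists_cons_of_mem haσ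
        exact Or.inr ⟨τ, fun b hb => h b (Sym.mem_cons_of_mem hb), rfl⟩
      · exact Or.inl fun b hb =>
          Finset.mem_of_mem_insert_of_ne (h b hb) (ne_of_mem_of_not_mem hb haσ)
    · rintro (h | ⟨τ, h, rfl⟩) b hb
      · exact Finset.mem_insert_of_mem (h b hb)
      · obtain rfl | hb := Sym.mem_cons.1 hb
        · exact Finset.mem_insert_self b s
        · exact h b hb
  have disjoint : Disjoint (s.sym (m + 1)) (((insert a s).sym m).image (a ::ₛ ·)) := by
    simp only [Finset.disjoint_right, Finset.mem_image, Finset.mem_sym_iff]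
    rintro _ ⟨τ, _, rfl⟩ h
    exact ha (h a (Sym.mem_cons_self a τ))
  rw [split, Finset.sum_union disjoint,
    Finset.sum_image fun _ _ _ _ h => (Sym.cons_inj_right a _ _).1 h, Finset.mul_sum]
  simp only [Sym.coe_cons, Multiset.map_cons, Multiset.prod_cons]

variable {N : ℕ}

theorem hPoly_zero_right (k : ℕ) : hPoly N k 0 = 1 := by
  rw [hPoly, Finset.sym_zero, Finset.sum_singleton]
  rfl

theorem hPoly_zero_left (m : ℕ) : hPoly N 0 (m + 1) = 0 := by
  simp [hPoly]

theorem hPoly_succ_succ (M : Fin N) (m : ℕ) :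
    hPoly N (M + 1) (m + 1) = hPoly N M (m + 1) + X M * hPoly N (M + 1) m := by
  have insert_last : Finset.univ.filter (fun i : Fin N => i.val < M.val + 1) =
      insert M (Finset.univ.filter fun i : Fin N => i.val < M.val) := by
    ext i
    simp only [Finset.mem_filter, Finset.mem_univ, true_and, Finset.mem_insert]
    omega
  simp only [hPoly, insert_last]
  exact sum_sym_insert X (by simp) m

theorem labelOp_zero (V : ℕ) : labelOp N 0 V = 0 := by
  refine LinearMap.ext fun F => funext fun u => ?_
  simp [labelOp]

theorem schubertCoeff_hPoly_mul [NeZero N] {k : ℕ} (hk : k ≤ N) (m : ℕ)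
    (f : MvPolynomial (Fin N) ℤ) :
    schubertCoeff (hPoly N k m * f) = ncEsymm (labelOp N k) N m (schubertCoeff f) := by
  induction k generalizing m f with
  | zero =>
    cases m with
    | zero => rw [hPoly_zero_right, ncEsymm_zero_right, one_mul, Module.End.one_apply]
    | succ m => rw [hPoly_zero_left, ncEsymm_eq_zero labelOp_zero, zero_mul, map_zero,
        LinearMap.zero_apply]
  | succ k ih =>
    have recursion (m : ℕ) := ncEsymm_succ_eq
      (fun V hV v hv => labelOpStep_mul_labelOp ⟨k, hk⟩ hv hV)
      (fun V hV => labelOp_mul_labelOpStep ⟨k, hk⟩ hV) m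
    induction m generalizing f with
    | zero => rw [hPoly_zero_right, ncEsymm_zero_right, one_mul, Module.End.one_apply]
    | succ m ihm =>
      calc schubertCoeff (hPoly N (k + 1) (m + 1) * f)
          = schubertCoeff (hPoly N k (m + 1) * f) +
              schubertCoeff (hPoly N (k + 1) m * (X ⟨k, hk⟩ * f)) := by
            rw [hPoly_succ_succ ⟨k, hk⟩, ← map_add]
            congr 1
            ring
        _ = (ncEsymm (labelOp N k) N (m + 1) + ncEsymm (labelOp N (k + 1)) N m *
              ∑ v ∈ Finset.range N, labelOpStep ⟨k, hk⟩ v) (schubertCoeff f) := by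
            rw [ih (by omega), ihm, schubertCoeff_X_mul, sum_labelOpStep]
            simp
        _ = ncEsymm (labelOp N (k + 1)) N (m + 1) (schubertCoeff f) := by
            rw [recursion]; rfl

end CompleteHomogeneous

section SpecialClass

variable {N : ℕ}

theorem downOp_single (p q : Fin N) (r : Perm (Fin N)) :
    downOp p q (Pi.single r 1) =
      if len (r * swap p q) = len r + 1 then Pi.single (r * swap p q) 1 else 0 := by
  funext u
  rw [downOp_apply]
  rcases eq_or_ne u (r * swap p q) with rfl | hu
  · have back : r * swap p q * swap p q = r := by rw [mul_assoc, swap_mul_self, mul_one]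
    rw [back, Pi.single_eq_same]
    split_ifs <;> first | omega | simp
  · have hu' : u * swap p q ≠ r := fun h => hu (by rw [← h, mul_assoc, swap_mul_self, mul_one])
    rw [Pi.single_eq_of_ne hu']
    split_ifs <;> simp [hu]

theorem labelOp_single (k V : ℕ) (r : Perm (Fin N)) :
    labelOp N k V (Pi.single r 1) = ∑ p : Fin N, ∑ q : Fin N,
      if p.val < k ∧ k ≤ q.val ∧ (r q).val = V ∧ len (r * swap p q) = len r + 1 then
        Pi.single (r * swap p q) 1 else 0 := by
  funext u
  change (∑ p, ∑ q, if (u p).val = V then _ else 0) = _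
  simp only [Finset.sum_apply]
  refine Finset.sum_congr rfl fun p _ => Finset.sum_congr rfl fun q _ => ?_
  rw [downOp_single]
  rcases eq_or_ne u (r * swap p q) with rfl | hu
  · rw [Perm.mul_apply, swap_apply_left]
    split_ifs <;> simp_all
  · split_ifs <;> simp [hu]

variable [NeZero N] {k m : ℕ}

theorem rPerm_zero (k : ℕ) : rPerm N k 0 = 1 := by
  simp [rPerm]

theorem rPerm_succ (k m : ℕ) :
    rPerm N k (m + 1) = rPerm N k m * swap (pos N k) (pos N (k + 1 + m)) := by
  simp [rPerm, List.range_succ, t]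

theorem rPerm_apply (hk : 1 ≤ k) (hkm : k + m ≤ N) (x : Fin N) :
    (rPerm N k m x).val + 1 =
      if x.val + 1 = k then k + m else if k ≤ x.val ∧ x.val < k + m then x.val else x.val + 1 := by
  induction m generalizing x with
  | zero =>
    rw [rPerm_zero, Perm.one_apply]
    split_ifs <;> omega
  | succ m ih =>
    have pos_k := val_pos_add_one (N := N) hk (by omega)
    have pos_new := val_pos_add_one (N := N) (j := k + 1 + m) (by omega) (by omega)
    rw [rPerm_succ, Perm.mul_apply, ih (by omega), swap_apply_def]
    simp only [Fin.ext_iff]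
    split_ifs <;> omega

theorem len_rPerm_mul_swap_iff {V : ℕ} (hk : 1 ≤ k) (hkN : k ≤ N) (hV : V < N)
    (hm : m = 0 ∨ k + m ≤ V) {p q : Fin N} (hp : p.val < k) (hq : k ≤ q.val)
    (hqV : (rPerm N k m q).val = V) :
    len (rPerm N k m * swap p q) = len (rPerm N k m) + 1 ↔
      V = k + m ∧ p = pos N k ∧ q = pos N (k + 1 + m) := by
  have value (x : Fin N) := rPerm_apply (m := m) hk (by omega) x
  have value_q := value q
  have hqV' : q.val = V ∧ k + m ≤ V := by split_ifs at value_q <;> omega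
  have pos_k := val_pos_add_one (N := N) hk hkN
  have pos_new := val_pos_add_one (N := N) (j := k + 1 + m) (by omega) (by omega)
  have value_k := value (pos N k)
  have value_new := value (pos N (k + 1 + m))
  have value_p := value p
  rw [if_pos (by omega)] at value_k
  rw [if_neg (by omega), if_neg (by omega)] at value_new
  constructor
  · intro cover
    obtain rfl : p = pos N k := by
      by_contra hpk
      have : p.val ≠ (pos N k).val := Fin.val_ne_of_ne hpk
      rw [if_neg (by omega), if_neg (by omega)] at value_p
      exact len_mul_swap_ne_of_between (rPerm N k m) (r := pos N k) (by omega) (by omega)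
        (by omega) (by omega) cover
    obtain rfl : q = pos N (k + 1 + m) := by
      by_contra hqm
      have : q.val ≠ (pos N (k + 1 + m)).val := Fin.val_ne_of_ne hqm
      exact len_mul_swap_ne_of_between (rPerm N k m) (r := pos N (k + 1 + m)) (by omega) (by omega)
        (by omega) (by omega) cover
    omega
  · rintro ⟨-, rfl, rfl⟩
    exact len_mul_swap_of_covBy_apply _ (by omega)
      (Fin.covBy_iff.2 (Nat.covBy_iff_add_one_eq.2 (by omega)))

theorem labelOp_single_rPerm {V : ℕ} (hk : 1 ≤ k) (hkN : k ≤ N) (hV : V < N)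
    (hm : m = 0 ∨ k + m ≤ V) :
    labelOp N k V (Pi.single (rPerm N k m) 1) =
      if V = k + m then Pi.single (rPerm N k (m + 1)) 1 else 0 := by
  have cover_iff (p q : Fin N) : (p.val < k ∧ k ≤ q.val ∧ (rPerm N k m q).val = V ∧
      len (rPerm N k m * swap p q) = len (rPerm N k m) + 1) ↔
        q = pos N (k + 1 + m) ∧ p = pos N k ∧ V = k + m := by
    constructor
    · rintro ⟨hp, hq, hqV, cover⟩
      have := (len_rPerm_mul_swap_iff hk hkN hV hm hp hq hqV).1 cover
      tauto
    · rintro ⟨rfl, rfl, rfl⟩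
      have pos_k := val_pos_add_one (N := N) hk hkN
      have pos_new := val_pos_add_one (N := N) (j := k + 1 + m) (by omega) (by omega)
      have value := rPerm_apply (m := m) hk (by omega) (pos N (k + 1 + m))
      rw [if_neg (by omega), if_neg (by omega)] at value
      have hp : (pos N k).val < k := by omega
      have hq : k ≤ (pos N (k + 1 + m)).val := by omega
      have hqV : (rPerm N k m (pos N (k + 1 + m))).val = k + m := by omega
      exact ⟨hp, hq, hqV, (len_rPerm_mul_swap_iff hk hkN hV hm hp hq hqV).2 ⟨rfl, rfl, rfl⟩⟩
  simp only [labelOp_single, cover_iff, ite_and, Finset.sum_ite_eq', Finset.mem_univ, if_true,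
    rPerm_succ]

theorem ncEsymm_labelOp_single_one {V : ℕ} (hk : 1 ≤ k) (hkN : k ≤ N) (hV : V ≤ N) :
    ncEsymm (labelOp N k) V m (Pi.single 1 1) =
      if m = 0 ∨ k + m ≤ V then Pi.single (rPerm N k m) 1 else 0 := by
  induction V generalizing m with
  | zero =>
    cases m with
    | zero => simp [ncEsymm, rPerm_zero]
    | succ m => rw [if_neg (by omega)]; rfl
  | succ V ih =>
    cases m with
    | zero => simp [ncEsymm, rPerm_zero]
    | succ m =>
      rw [ncEsymm, LinearMap.add_apply, Module.End.mul_apply, ih (by omega), ih (by omega)]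
      by_cases h : m = 0 ∨ k + m ≤ V
      · rw [if_pos h, labelOp_single_rPerm hk hkN hV h]
        by_cases hV : V = k + m
        · rw [if_pos hV, if_neg (by omega), if_pos (by omega), zero_add]
        · rw [if_neg hV, add_zero]
          congr 1
          rw [eq_iff_iff]
          omega
      · rw [if_neg h, map_zero, if_neg (by omega), if_neg (by omega), add_zero]

theorem schubertCoeff_hPoly (hk : 1 ≤ k) (hkm : k + m ≤ N) :
    schubertCoeff (hPoly N k m) = Pi.single (rPerm N k m) 1 := by
  rw [← mul_one (hPoly N k m), schubertCoeff_hPoly_mul (by omega), ← C_1, schubertCoeff_C,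
    ncEsymm_labelOp_single_one hk (by omega) le_rfl, if_pos (Or.inr hkm)]

theorem structure_constant_eq_schubertCoeff {w v : Perm (Fin N)} {c : Perm (Fin N) → ℤ}
    (hc : SS N w * SS N v = ∑ u, c u • SS N u) :
    c = schubertCoeff (schubertPoly N w * schubertPoly N v) := by
  have mem : schubertPoly N w * schubertPoly N v - ∑ u, c u • schubertPoly N u ∈ symIdeal N := by
    rw [← Ideal.Quotient.eq, map_mul, map_sum]
    simp only [map_zsmul]
    exact hc
  have vanish := schubertCoeff_eq_zero_of_mem_symIdeal mem
  rw [map_sub, sub_eq_zero, map_sum] at vanish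
  simp only [map_zsmul, schubertCoeff_schubertPoly] at vanish
  rw [vanish]
  funext u
  simp [Pi.single_apply]

theorem structure_constant_rPerm_eq_ncEsymm (hk : 1 ≤ k) (hkm : k + m ≤ N) {w : Perm (Fin N)}
    {c : Perm (Fin N) → ℤ} (hc : SS N w * SS N (rPerm N k m) = ∑ u, c u • SS N u) :
    c = ncEsymm (labelOp N k) N m (Pi.single w 1) := by
  have same : schubertCoeff (schubertPoly N (rPerm N k m) - hPoly N k m) = 0 := by
    rw [map_sub, schubertCoeff_schubertPoly, schubertCoeff_hPoly hk hkm, sub_self]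
  have same_mul := schubertCoeff_mul_eq_zero same (schubertPoly N w)
  rw [mul_sub, map_sub, sub_eq_zero] at same_mul
  rw [structure_constant_eq_schubertCoeff hc, same_mul, mul_comm,
    schubertCoeff_hPoly_mul (by omega), schubertCoeff_schubertPoly]

end SpecialClass

section IncreasingPaths

/-- The encoding `ab` of a path with step `m` (counted from zero) replaced by the transposition of
the positions `x` and `y` (counted from one). -/
def setStep (m x y : ℕ) (ab : (ℕ → ℕ) × (ℕ → ℕ)) : (ℕ → ℕ) × (ℕ → ℕ) :=
  (Function.update ab.1 m x, Function.update ab.2 m y)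

theorem setStep_of_ne {m j : ℕ} (h : j ≠ m) (x y : ℕ) (ab : (ℕ → ℕ) × (ℕ → ℕ)) :
    (setStep m x y ab).1 j = ab.1 j ∧ (setStep m x y ab).2 j = ab.2 j := by
  simp [setStep, h]

theorem setStep_self (m x y : ℕ) (ab : (ℕ → ℕ) × (ℕ → ℕ)) :
    (setStep m x y ab).1 m = x ∧ (setStep m x y ab).2 m = y := by
  simp [setStep]

theorem setStep_setStep (m x y x' y' : ℕ) (ab : (ℕ → ℕ) × (ℕ → ℕ)) :
    setStep m x y (setStep m x' y' ab) = setStep m x y ab := by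
  simp [setStep]

theorem setStep_eq_self (m : ℕ) (ab : (ℕ → ℕ) × (ℕ → ℕ)) :
    setStep m (ab.1 m) (ab.2 m) ab = ab := by
  simp [setStep]

theorem injOn_setStep (m x y : ℕ) :
    Set.InjOn (setStep m x y) {ab | ab.1 m = 0 ∧ ab.2 m = 0} := by
  intro ab hab ab' hab' h
  have restore {ab} (hab : ab ∈ {ab : (ℕ → ℕ) × (ℕ → ℕ) | ab.1 m = 0 ∧ ab.2 m = 0}) :
      setStep m 0 0 (setStep m x y ab) = ab := by
    rw [setStep_setStep]
    simpa only [hab.1, hab.2] using setStep_eq_self m ab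
  rw [← restore hab, h, restore hab']

theorem card_biUnion_setStep {N m : ℕ} {S : Fin N × Fin N → Finset ((ℕ → ℕ) × (ℕ → ℕ))}
    {P : Finset (Fin N × Fin N)} (zero : ∀ x ∈ P, ∀ ab ∈ S x, ab.1 m = 0 ∧ ab.2 m = 0) :
    (P.biUnion fun x => (S x).image (setStep m (x.1.val + 1) (x.2.val + 1))).card =
      ∑ x ∈ P, (S x).card := by
  rw [Finset.card_biUnion]
  · exact Finset.sum_congr rfl fun x hx =>
      Finset.card_image_of_injOn ((injOn_setStep _ _ _).mono fun ab hab => zero x hx ab hab)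
  · intro x _ y _ hxy
    refine Finset.disjoint_left.2 fun ab hx hy => hxy ?_
    obtain ⟨ab₁, -, rfl⟩ := Finset.mem_image.1 hx
    obtain ⟨ab₂, -, h⟩ := Finset.mem_image.1 hy
    have hx := setStep_self m (x.1.val + 1) (x.2.val + 1) ab₁
    have hy := setStep_self m (y.1.val + 1) (y.2.val + 1) ab₂
    rw [h] at hy
    exact Prod.ext (Fin.ext (by omega)) (Fin.ext (by omega))

/-- The pairs of positions `(p, q)` (counted from zero) for which `u t_{p,q} < u` is a cover with
label `V` (a value counted from zero) of the `k`-Bruhat order. -/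
noncomputable def labelCovers {N : ℕ} (k V : ℕ) (u : Perm (Fin N)) : Finset (Fin N × Fin N) :=
  {x | (u x.1).val = V ∧ x.1.val < k ∧ k ≤ x.2.val ∧ len (u * swap x.1 x.2) + 1 = len u}

theorem labelOp_apply_eq_sum_labelCovers {N : ℕ} (k V : ℕ) (F : Perm (Fin N) → ℤ)
    (u : Perm (Fin N)) :
    labelOp N k V F u = ∑ x ∈ labelCovers k V u, F (u * swap x.1 x.2) := by
  rw [labelCovers, Finset.sum_filter, Fintype.sum_prod_type]
  change (∑ p : Fin N, ∑ q : Fin N, if (u p).val = V then _ else 0) = _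
  simp only [downOp_apply, ite_and]

variable {N : ℕ} [NeZero N] {k m : ℕ}

theorem tProd_zero (a b : ℕ → ℕ) : tProd N a b 0 = 1 := by
  simp [tProd]

theorem tProd_succ (a b : ℕ → ℕ) (i : ℕ) :
    tProd N a b (i + 1) = tProd N a b i * swap (pos N (a i)) (pos N (b i)) := by
  simp [tProd, List.range_succ, t]

theorem tProd_setStep {i : ℕ} (hi : i ≤ m) (x y : ℕ) (ab : (ℕ → ℕ) × (ℕ → ℕ)) :
    tProd N (setStep m x y ab).1 (setStep m x y ab).2 i = tProd N ab.1 ab.2 i := by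
  induction i with
  | zero => rw [tProd_zero, tProd_zero]
  | succ i ih =>
    have same := setStep_of_ne (m := m) (j := i) (by omega) x y ab
    rw [tProd_succ, tProd_succ, ih (by omega), same.1, same.2]

theorem tProd_setStep_succ (p q : Fin N) (ab : (ℕ → ℕ) × (ℕ → ℕ)) :
    tProd N (setStep m (p.val + 1) (q.val + 1) ab).1 (setStep m (p.val + 1) (q.val + 1) ab).2
      (m + 1) = tProd N ab.1 ab.2 m * swap p q := by
  have last := setStep_self m (p.val + 1) (q.val + 1) ab
  rw [tProd_succ, tProd_setStep le_rfl, last.1, last.2, pos_val_add_one, pos_val_add_one]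

theorem label_setStep {i : ℕ} (hi : i < m) (w : Perm (Fin N)) (x y : ℕ)
    (ab : (ℕ → ℕ) × (ℕ → ℕ)) :
    label w (setStep m x y ab).1 (setStep m x y ab).2 i = label w ab.1 ab.2 i := by
  rw [label, label, tProd_setStep (by omega), (setStep_of_ne hi.ne x y ab).1]

theorem label_setStep_self {w u : Perm (Fin N)} {p q : Fin N} {ab : (ℕ → ℕ) × (ℕ → ℕ)}
    (hu : u * swap p q = w * tProd N ab.1 ab.2 m) :
    label w (setStep m (p.val + 1) (q.val + 1) ab).1 (setStep m (p.val + 1) (q.val + 1) ab).2 m =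
      (u p).val + 1 := by
  rw [label, tProd_setStep_succ, ← mul_assoc, ← hu, mul_assoc, swap_mul_self, mul_one,
    (setStep_self _ _ _ _).1, val, pos_val_add_one]

theorem stepOK_succ_iff {w : Perm (Fin N)} {a b : ℕ → ℕ} :
    StepOK N k (m + 1) w a b ↔ StepOK N k m w a b ∧
      (1 ≤ a m ∧ a m ≤ k ∧ k < b m ∧ b m ≤ N) ∧
      len (w * tProd N a b (m + 1)) = len w + (m + 1) := by
  have bounds := Nat.forall_lt_succ_right (n := m)
    (p := fun i => 1 ≤ a i ∧ a i ≤ k ∧ k < b i ∧ b i ≤ N)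
  have lengths := Nat.forall_lt_succ_right (n := m + 1)
    (p := fun i => len (w * tProd N a b i) = len w + i)
  simp only [Nat.lt_succ_iff] at lengths
  rw [StepOK, StepOK, bounds, lengths]
  tauto

theorem stepOK_setStep_iff {w : Perm (Fin N)} {x y : ℕ} {ab : (ℕ → ℕ) × (ℕ → ℕ)} :
    StepOK N k m w (setStep m x y ab).1 (setStep m x y ab).2 ↔ StepOK N k m w ab.1 ab.2 := by
  refine and_congr (forall₂_congr fun i hi => ?_) (forall₂_congr fun i hi => ?_)
  · rw [(setStep_of_ne hi.ne x y ab).1, (setStep_of_ne hi.ne x y ab).2]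
  · rw [tProd_setStep hi]

theorem pathWit_setStep_iff {w u : Perm (Fin N)} {p q : Fin N} {ab : (ℕ → ℕ) × (ℕ → ℕ)}
    (hab : ∀ i, m ≤ i → ab.1 i = 0 ∧ ab.2 i = 0) :
    PathWit N k (m + 1) w u (setStep m (p.val + 1) (q.val + 1) ab) ↔
      (p.val < k ∧ k ≤ q.val ∧ len (u * swap p q) + 1 = len u) ∧
        PathWit N k m w (u * swap p q) ab := by
  have last := setStep_self m (p.val + 1) (q.val + 1) ab
  have zero (i) (hi : m + 1 ≤ i) : (setStep m (p.val + 1) (q.val + 1) ab).1 i = 0 ∧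
      (setStep m (p.val + 1) (q.val + 1) ab).2 i = 0 := by
    rw [(setStep_of_ne (by omega) _ _ _).1, (setStep_of_ne (by omega) _ _ _).2]
    exact hab i (by omega)
  have endpoint : u = w * (tProd N ab.1 ab.2 m * swap p q) ↔
      u * swap p q = w * tProd N ab.1 ab.2 m := by
    rw [← mul_assoc, ← mul_inv_eq_iff_eq_mul, swap_inv]
  rw [PathWit, PathWit, stepOK_succ_iff, stepOK_setStep_iff, tProd_setStep_succ, last.1, last.2,
    endpoint]
  constructor
  · rintro ⟨⟨steps, bounds, length⟩, hu, -⟩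
    have := steps.2 m le_rfl
    rw [← endpoint.2 hu] at length
    rw [← hu] at this
    exact ⟨⟨by omega, by omega, by omega⟩, steps, hu, hab⟩
  · rintro ⟨⟨hp, hq, cover⟩, steps, hu, -⟩
    have := steps.2 m le_rfl
    rw [← hu] at this
    refine ⟨⟨steps, by omega, ?_⟩, hu, zero⟩
    rw [← endpoint.2 hu]
    omega

theorem exists_setStep_eq {w u : Perm (Fin N)} {ab : (ℕ → ℕ) × (ℕ → ℕ)}
    (h : PathWit N k (m + 1) w u ab) : ∃ (p q : Fin N) (ab' : (ℕ → ℕ) × (ℕ → ℕ)),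
      (∀ i, m ≤ i → ab'.1 i = 0 ∧ ab'.2 i = 0) ∧ setStep m (p.val + 1) (q.val + 1) ab' = ab := by
  obtain ⟨⟨bounds, -⟩, -, zero⟩ := h
  have bounds := bounds m m.lt_succ_self
  refine ⟨pos N (ab.1 m), pos N (ab.2 m), setStep m 0 0 ab, fun i hi => ?_, ?_⟩
  · rcases hi.eq_or_lt with rfl | hi
    · exact setStep_self _ _ _ _
    · rw [(setStep_of_ne hi.ne' _ _ _).1, (setStep_of_ne hi.ne' _ _ _).2]
      exact zero i hi
  · rw [val_pos_add_one bounds.1 (by omega), val_pos_add_one (by omega) bounds.2.2.2,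
      setStep_setStep, setStep_eq_self]

/-- The increasing paths of length `m` from `w` to `u` in the `k`-Bruhat order with labels at most
`V`. -/
def boundedIncPaths (N k V m : ℕ) [NeZero N] (w u : Perm (Fin N)) : Set ((ℕ → ℕ) × (ℕ → ℕ)) :=
  {ab ∈ IncPaths N k m w u | ∀ i < m, label w ab.1 ab.2 i ≤ V}

variable {V : ℕ} {w u : Perm (Fin N)} {ab : (ℕ → ℕ) × (ℕ → ℕ)}

theorem mem_boundedIncPaths_zero_iff : ab ∈ boundedIncPaths N k V 0 w u ↔ u = w ∧ ab = (0, 0) := by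
  simp only [boundedIncPaths, IncPaths, PathWit, StepOK, Set.mem_ofPred_eq, Prod.ext_iff,
    funext_iff, tProd_zero, mul_one, Nat.not_lt_zero, Nat.le_zero, forall_eq, zero_le]
  simp [forall_and]

theorem mem_boundedIncPaths_succ_iff : ab ∈ boundedIncPaths N k V (m + 1) w u ↔
    ab ∈ IncPaths N k (m + 1) w u ∧ label w ab.1 ab.2 m ≤ V := by
  refine and_congr_right fun h => ⟨fun bound => bound m m.lt_succ_self, fun bound i hi => ?_⟩
  rcases (Nat.lt_succ_iff.1 hi).eq_or_lt with rfl | hi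
  · exact bound
  · exact (h.2 i m hi m.lt_succ_self).le.trans bound

theorem setStep_mem_incPaths_iff {p q : Fin N} (hab : ∀ i, m ≤ i → ab.1 i = 0 ∧ ab.2 i = 0) :
    setStep m (p.val + 1) (q.val + 1) ab ∈ IncPaths N k (m + 1) w u ↔
      (p.val < k ∧ k ≤ q.val ∧ len (u * swap p q) + 1 = len u) ∧
        ab ∈ boundedIncPaths N k (u p) m w (u * swap p q) := by
  rw [boundedIncPaths, IncPaths, IncPaths, Set.mem_ofPred_eq, pathWit_setStep_iff hab, and_assoc]
  refine and_congr_right fun _ => ?_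
  simp only [Set.mem_ofPred_eq, and_assoc]
  refine and_congr_right fun witness => ?_
  have last := label_setStep_self witness.2.1
  have before {i} (hi : i < m) := label_setStep hi w (p.val + 1) (q.val + 1) ab
  constructor
  · intro inc
    refine ⟨fun i j hij hj => ?_, fun i hi => ?_⟩
    · rw [← before (hij.trans hj), ← before hj]
      exact inc i j hij (hj.trans m.lt_succ_self)
    · rw [← before hi, ← Nat.lt_succ_iff, Nat.succ_eq_add_one, ← last]
      exact inc i m hi m.lt_succ_self
  · rintro ⟨inc, bound⟩ i j hij hj
    rcases (Nat.lt_succ_iff.1 hj).eq_or_lt with rfl | hj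
    · rw [before hij, last]
      exact Nat.lt_succ_of_le (bound i hij)
    · rw [before (hij.trans hj), before hj]
      exact inc i j hij hj

/-- The increasing paths from `w` to `u` with labels at most `V`, as a finite set: those of length
`m + 1` with labels at most `V + 1` either have labels at most `V` or end with a cover whose label
is `V + 1`. -/
noncomputable def incPathFinset (k : ℕ) (w : Perm (Fin N)) :
    ℕ → ℕ → Perm (Fin N) → Finset ((ℕ → ℕ) × (ℕ → ℕ))
  | _, 0, u => if u = w then {(0, 0)} else ∅
  | 0, _ + 1, _ => ∅
  | V + 1, m + 1, u => incPathFinset k w V (m + 1) u ∪ (labelCovers k V u).biUnion fun x =>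
      (incPathFinset k w V m (u * swap x.1 x.2)).image (setStep m (x.1.val + 1) (x.2.val + 1))

theorem mem_incPaths_and_label_eq_iff :
    ab ∈ IncPaths N k (m + 1) w u ∧ label w ab.1 ab.2 m = V + 1 ↔
      ∃ x ∈ labelCovers k V u, ∃ ab' ∈ boundedIncPaths N k V m w (u * swap x.1 x.2),
        setStep m (x.1.val + 1) (x.2.val + 1) ab' = ab := by
  constructor
  · rintro ⟨inc, hlabel⟩
    obtain ⟨p, q, ab', zero, rfl⟩ := exists_setStep_eq inc.1
    obtain ⟨cover, mem⟩ := (setStep_mem_incPaths_iff zero).1 inc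
    rw [label_setStep_self mem.1.1.2.1, Nat.succ_inj] at hlabel
    subst hlabel
    exact ⟨(p, q), by simpa [labelCovers] using cover, ab', mem, rfl⟩
  · rintro ⟨⟨p, q⟩, hx, ab', mem, rfl⟩
    obtain ⟨rfl, cover⟩ := (Finset.mem_filter.1 hx).2
    exact ⟨(setStep_mem_incPaths_iff mem.1.1.2.2).2 ⟨cover, mem⟩, label_setStep_self mem.1.1.2.1⟩

theorem mem_incPathFinset : ab ∈ incPathFinset k w V m u ↔ ab ∈ boundedIncPaths N k V m w u := by
  induction V generalizing m u ab with
  | zero =>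
    cases m with
    | zero =>
      rw [mem_boundedIncPaths_zero_iff, incPathFinset]
      split_ifs with h <;> simp [h]
    | succ m => simp [incPathFinset, mem_boundedIncPaths_succ_iff, label, val]
  | succ V ih =>
    cases m with
    | zero =>
      rw [mem_boundedIncPaths_zero_iff, incPathFinset]
      split_ifs with h <;> simp [h]
    | succ m =>
      simp only [incPathFinset, Finset.mem_union, Finset.mem_biUnion, Finset.mem_image, ih,
        ← mem_incPaths_and_label_eq_iff, mem_boundedIncPaths_succ_iff, ← and_or_left,
        Nat.le_succ_iff]

theorem card_incPathFinset (k V m : ℕ) (w u : Perm (Fin N)) :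
    ((incPathFinset k w V m u).card : ℤ) = ncEsymm (labelOp N k) V m (Pi.single w 1) u := by
  induction V generalizing m u with
  | zero =>
    cases m with
    | zero =>
      rw [incPathFinset, ncEsymm_zero_right, Module.End.one_apply, Pi.single_apply]
      split_ifs <;> rfl
    | succ m => rfl
  | succ V ih =>
    cases m with
    | zero =>
      rw [incPathFinset, ncEsymm_zero_right, Module.End.one_apply, Pi.single_apply]
      split_ifs <;> rfl
    | succ m =>
      have disjoint : Disjoint (incPathFinset k w V (m + 1) u)
          ((labelCovers k V u).biUnion fun x => (incPathFinset k w V m (u * swap x.1 x.2)).image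
            (setStep m (x.1.val + 1) (x.2.val + 1))) := by
        refine Finset.disjoint_left.2 fun ab small large => ?_
        simp only [Finset.mem_biUnion, Finset.mem_image, mem_incPathFinset,
          ← mem_incPaths_and_label_eq_iff] at large
        have := (mem_boundedIncPaths_succ_iff.1 (mem_incPathFinset.1 small)).2
        omega
      rw [incPathFinset, Finset.card_union_of_disjoint disjoint, card_biUnion_setStep
        fun x _ ab hab => (mem_incPathFinset.1 hab).1.1.2.2 m le_rfl, ncEsymm, LinearMap.add_apply,
        Pi.add_apply, Module.End.mul_apply, labelOp_apply_eq_sum_labelCovers, ← ih]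
      push_cast
      simp only [ih]

theorem ncard_incPaths (k m : ℕ) (w u : Perm (Fin N)) :
    ((IncPaths N k m w u).ncard : ℤ) = ncEsymm (labelOp N k) N m (Pi.single w 1) u := by
  have finset : IncPaths N k m w u = incPathFinset k w N m u := by
    ext ab
    rw [Finset.mem_coe, mem_incPathFinset]
    exact ⟨fun h => ⟨h, fun i _ => Fin.is_lt _⟩, And.left⟩
  rw [finset, Set.ncard_coe_finset, card_incPathFinset]

end IncreasingPaths

/-- The structure constant `c^{w'}_{w, r[k,m]}` equals the number of paths of length
`m` in the `k`-Bruhat order from `w` to `w'` with strictly increasing labels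
(paths being encoded by their normalized sequences of transpositions).  The
structure constants are encoded by their defining property (here the paper's
`n` is `n+1`). -/
theorem structure_constant_rPerm_eq_card_paths (n k m : ℕ) (hk : 1 ≤ k) (hm : 1 ≤ m)
    (hkm : k + m ≤ n + 1) (w w' : Equiv.Perm (Fin (n + 1)))
    (c : Equiv.Perm (Fin (n + 1)) → ℤ)
    (hc : SS (n + 1) w * SS (n + 1) (rPerm (n + 1) k m) =
      ∑ u, c u • SS (n + 1) u) :
    c w' = ((IncPaths (n + 1) k m w w').ncard : ℤ) := by
  rw [structure_constant_rPerm_eq_ncEsymm hk hkm hc, ncard_incPaths]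

end SchubertPieri
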